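/- arXiv:0910.3603 — 6 statements merged into one kernel-verified Lean document; each statement's English description precedes it below -/
import Mathlib

section
/- For all μ, ν ∈ P(E) with μ ≪ ν, the limit lim_{n→∞} ‖π_n^μ(y) − π_n^ν(y)‖ exists for Q_μ-almost every y ∈ F^ℕ. (Since μ ≪ ν implies Q_μ ≪ Q_ν, the filter π_n^ν is well-defined Q_μ-almost surely.) -/
open MeasureTheory Filter Topology ENNReal

/-- `P(E)`: probability vectors on a countable set `E`, with the topology of
pointwise (equivalently, weak) convergence inherited from `E → ℝ`. -/
abbrev ProbVec (E : Type*) := {p : E → ℝ // (∀ i, 0 ≤ p i) ∧ HasSum p 1}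

/-- Row-vector/matrix product `(p M(y))_j = ∑_i p_i M_{ij}(y)`. -/
noncomputable def rowMul {E F : Type*} (M : F → E → E → ℝ) (p : E → ℝ) (y : F) : E → ℝ :=
  fun j => ∑' i, p i * M y i j

/-- Iterated product `p M(y₁)⋯M(yₙ)` along a list of observations. -/
noncomputable def rowIter {E F : Type*} (M : F → E → E → ℝ) (p : E → ℝ) (ys : List F) : E → ℝ :=
  ys.foldl (rowMul M) p

/-- `p 1 = ∑_j p_j`. -/
noncomputable def rowTot {E : Type*} (p : E → ℝ) : ℝ := ∑' j, p j

/-- One step of the filter: `μ ↦ μM(y)/(μM(y)1)` (junk value `μ` when undefined). -/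
noncomputable def filterStep {E F : Type*} (M : F → E → E → ℝ) (μ : ProbVec E) (y : F) :
    ProbVec E := by
  classical
  exact if h : ∃ ν : ProbVec E, ∀ j,
      (ν : E → ℝ) j * rowTot (rowMul M (μ : E → ℝ) y) = rowMul M (μ : E → ℝ) y j
    then h.choose else μ

/-- The filter `μM(y₁)⋯M(yₙ)/(μM(y₁)⋯M(yₙ)1)` (junk value `μ` when undefined). -/
noncomputable def filterList {E F : Type*} (M : F → E → E → ℝ) (μ : ProbVec E) (ys : List F) :
    ProbVec E := by
  classical
  exact if h : ∃ ν : ProbVec E, ∀ j,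
      (ν : E → ℝ) j * rowTot (rowIter M (μ : E → ℝ) ys) = rowIter M (μ : E → ℝ) ys j
    then h.choose else μ

/-- The filter `π_n^μ(y)` as a function of the observation path `y : ℕ → F`
(the coordinate `y k` represents the observation `y_{k+1}`). -/
noncomputable def filterSeq {E F : Type*} (M : F → E → E → ℝ) (μ : ProbVec E) (y : ℕ → F)
    (n : ℕ) : ProbVec E :=
  filterList M μ (List.ofFn fun k : Fin n => y k)

/-- The filter transition kernel `Π`, acting on functions:
`Πf(μ) = ∫ f(μM(y)/(μM(y)1)) ⬝ (μM(y)1) φ(dy)`. -/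
noncomputable def filterKernel {E F : Type*} [MeasurableSpace F] (M : F → E → E → ℝ)
    (φ : Measure F) (f : ProbVec E → ℝ) (μ : ProbVec E) : ℝ :=
  ∫ y, f (filterStep M μ y) * rowTot (rowMul M (μ : E → ℝ) y) ∂φ

/-- Bounded continuous real functions on `P(E)`. -/
def IsBddCont {E : Type*} (f : ProbVec E → ℝ) : Prop :=
  Continuous f ∧ ∃ C : ℝ, ∀ μ, |f μ| ≤ C

/-- A probability measure `𝕄` on `P(E)` is `Π`-invariant if `∫ Πf d𝕄 = ∫ f d𝕄`
for every bounded continuous `f`. -/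
def IsPiInvariant {E F : Type*} [MeasurableSpace F] (M : F → E → E → ℝ) (φ : Measure F)
    (𝕄 : ProbabilityMeasure (ProbVec E)) : Prop :=
  ∀ f : ProbVec E → ℝ, IsBddCont f →
    ∫ μ, filterKernel M φ f μ ∂(𝕄 : Measure (ProbVec E)) =
      ∫ μ, f μ ∂(𝕄 : Measure (ProbVec E))

/-- The signal transition matrix `P_{ij} = ∫ M_{ij}(y) φ(dy)`. -/
noncomputable def transMat {E F : Type*} [MeasurableSpace F] (M : F → E → E → ℝ)
    (φ : Measure F) : E → E → ℝ :=
  fun i j => ∫ y, M y i j ∂φ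

/-- Powers of a transition matrix on a countable state space. -/
noncomputable def matPow {E : Type*} [DecidableEq E] (P : E → E → ℝ) : ℕ → E → E → ℝ
  | 0 => fun i j => if i = j then 1 else 0
  | n + 1 => fun i j => ∑' k, matPow P n i k * P k j

/-- Total variation (ℓ¹) distance on `P(E)`. -/
noncomputable def tvDist {E : Type*} (p q : ProbVec E) : ℝ :=
  ∑' i, |(p : E → ℝ) i - (q : E → ℝ) i|

/-!
Run two unnormalized filters from `r` and `q` along observations drawn from `Q_p`. Since
`(rN - qN)⁺ ≤ (r - q)⁺ N`, the mass of `(rₙ - qₙ)⁺` divided by the likelihood `pₙ1` is a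
nonnegative supermartingale under `Q_p`, hence converges almost surely. Take `p = μ`. For `r = ν`
and `q = 0` this says that the likelihood ratio `wₙ` of `ν` to `μ` converges; for `r = μ` and
`q = cν` it says that the excess of `π_n^μ` over `c wₙ π_n^ν` converges, for all `c` in a countable
dense set at once. The excess is Lipschitz in `c`, so `c` may be replaced by `1 / wₙ`, which turns
it into the excess of `π_n^μ` over `π_n^ν`, half of their total variation distance.

Here `lim wₙ ≠ 0` is needed, and this is where `μ ≪ ν` enters: if `wₙ → 0`, then for every `k` the
excess of `π_n^μ` over `k wₙ π_n^ν` tends to `1`; but the excess of `μ` over `kν` vanishes as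
`k → ∞`, and by Fatou so does the expected limit.
-/

section Analysis

open scoped NNReal

lemma exists_tendsto_apply_of_lipschitzWith {X Y : Type*} [PseudoMetricSpace X]
    [PseudoMetricSpace Y] [CompleteSpace Y] {f : ℕ → X → Y} {K : ℝ≥0}
    (hf : ∀ n, LipschitzWith K (f n)) {s : Set X} (hs : Dense s)
    (hlim : ∀ z ∈ s, ∃ L, Tendsto (fun n => f n z) atTop (𝓝 L))
    {u : ℕ → X} {x : X} (hu : Tendsto u atTop (𝓝 x)) :
    ∃ L, Tendsto (fun n => f n (u n)) atTop (𝓝 L) := by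
  refine cauchySeq_tendsto_of_complete (Metric.cauchySeq_iff'.2 fun ε hε => ?_)
  obtain ⟨z, hzs, hz⟩ : ∃ z ∈ s, K * dist x z < ε / 3 := by
    have hcont : Continuous fun z => K * dist x z := by fun_prop
    exact hs.exists_mem_open ((isOpen_Iio (a := ε / 3)).preimage hcont)
      ⟨x, show K * dist x x < ε / 3 by simpa using hε⟩
  obtain ⟨L, hL⟩ := hlim z hzs
  have hclose : ∀ᶠ n in atTop, dist (f n (u n)) (f n z) < ε / 3 :=
    ((hu.dist tendsto_const_nhds).const_mul (K : ℝ)).eventually_lt_const hz |>.mono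
      fun n hn => ((hf n).dist_le_mul _ _).trans_lt hn
  obtain ⟨N₁, hN₁⟩ := eventually_atTop.1 hclose
  obtain ⟨N₂, hN₂⟩ := Metric.cauchySeq_iff.1 hL.cauchySeq (ε / 3) (by linarith)
  refine ⟨max N₁ N₂, fun n hn => ?_⟩
  set m := max N₁ N₂
  calc dist (f n (u n)) (f m (u m))
      ≤ dist (f n (u n)) (f n z) + dist (f n z) (f m z) + dist (f m z) (f m (u m)) :=
        dist_triangle4 _ _ _ _
    _ < ε / 3 + ε / 3 + ε / 3 := by
        rw [dist_comm (f m z)]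
        gcongr
        · exact hN₁ n ((le_max_left _ _).trans hn)
        · exact hN₂ n ((le_max_right _ _).trans hn) m (le_max_right _ _)
        · exact hN₁ m (le_max_left _ _)
    _ = ε := add_thirds ε

lemma ae_exists_tendsto_of_setLIntegral_succ_le {Ω : Type*} {m0 : MeasurableSpace Ω}
    {μ : Measure Ω} [IsFiniteMeasure μ] {ℱ : Filtration ℕ m0} {f : ℕ → Ω → ℝ≥0∞}
    (hf : ∀ n, Measurable[ℱ n] (f n)) (hf₀ : ∫⁻ ω, f 0 ω ∂μ ≠ ∞)
    (hle : ∀ n s, MeasurableSet[ℱ n] s → ∫⁻ ω in s, f (n + 1) ω ∂μ ≤ ∫⁻ ω in s, f n ω ∂μ) :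
    ∀ᵐ ω ∂μ, ∃ L : ℝ≥0, Tendsto (fun n => f n ω) atTop (𝓝 L) := by
  have hmeas (n) : Measurable (f n) := (hf n).mono (ℱ.le n) le_rfl
  have hanti : Antitone fun n => ∫⁻ ω, f n ω ∂μ :=
    antitone_nat_of_succ_le fun n => by simpa using hle n Set.univ MeasurableSet.univ
  have hfin (n) : ∫⁻ ω, f n ω ∂μ ≠ ∞ := ne_top_of_le_ne_top hf₀ (hanti n.zero_le)
  have hlt (n) : ∀ᵐ ω ∂μ, f n ω < ∞ := ae_lt_top (hmeas n) (hfin n)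
  have hint (n) : Integrable (fun ω => (f n ω).toReal) μ :=
    integrable_toReal_of_lintegral_ne_top (hmeas n).aemeasurable (hfin n)
  have hsuper : Supermartingale (fun n ω => (f n ω).toReal) ℱ μ := by
    refine supermartingale_of_setIntegral_succ_le
      (fun n => (hf n).ennreal_toReal.stronglyMeasurable) hint fun n s hs => ?_
    rw [integral_toReal (hmeas _).aemeasurable (ae_restrict_of_ae (hlt _)),
      integral_toReal (hmeas _).aemeasurable (ae_restrict_of_ae (hlt _))]
    exact ENNReal.toReal_mono
      (ne_top_of_le_ne_top (hfin n) (setLIntegral_le_lintegral _ _)) (hle n s hs)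
  have hbdd (n) : eLpNorm ((-fun n ω => (f n ω).toReal) n) 1 μ ≤ (∫⁻ ω, f 0 ω ∂μ).toNNReal := by
    rw [Pi.neg_apply, eLpNorm_neg, eLpNorm_one_eq_lintegral_enorm, ENNReal.coe_toNNReal hf₀]
    refine (lintegral_mono fun ω => ?_).trans (hanti n.zero_le)
    rw [Real.enorm_of_nonneg ENNReal.toReal_nonneg]
    exact ENNReal.ofReal_toReal_le
  filter_upwards [hsuper.neg.ae_tendsto_limitProcess hbdd, ae_all_iff.2 hlt] with ω hω hωlt
  refine ⟨_, (ENNReal.tendsto_ofReal hω.neg).congr fun n => ?_⟩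
  simp [ENNReal.ofReal_toReal (hωlt n).ne]

lemma setLIntegral_div_withDensity {α : Type*} {m0 : MeasurableSpace α} {μ : Measure α}
    {f g : α → ℝ≥0∞} (hf : Measurable f) (hg : Measurable g) (hf_top : ∀ᵐ x ∂μ, f x ≠ ∞)
    {s : Set α} (hs : MeasurableSet s) :
    ∫⁻ x in s, g x / f x ∂(μ.withDensity f) = ∫⁻ x in s ∩ {x | f x ≠ 0}, g x ∂μ := by
  have hset : MeasurableSet {x | f x ≠ 0} := (hf (measurableSet_singleton 0)).compl
  have hdiv : Measurable fun x => g x / f x := hg.div hf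
  rw [setLIntegral_withDensity_eq_setLIntegral_mul _ hf hdiv hs, Set.inter_comm,
    ← Measure.restrict_restrict hset, ← lintegral_indicator hset]
  refine lintegral_congr_ae (ae_restrict_of_ae ?_)
  filter_upwards [hf_top] with x hx
  by_cases h0 : f x = 0
  · simp [h0]
  · simp [h0, ENNReal.mul_div_cancel h0 hx]

lemma measurePreserving_init_last {F : Type*} [MeasurableSpace F] (μ : Measure F) [SigmaFinite μ]
    (n : ℕ) :
    MeasurePreserving
      (fun v : Fin (n + 1) → F => ((Fin.init v : Fin n → F), v (Fin.last n)))
      (Measure.pi fun _ => μ) ((Measure.pi fun _ => μ).prod μ) := by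
  convert! Measure.measurePreserving_swap.comp
    (measurePreserving_piFinSuccAbove (fun _ : Fin (n + 1) => μ) (Fin.last n)) using 2 with v
  simp [MeasurableEquiv.piFinSuccAbove]

end Analysis

section Excess

open scoped NNReal

variable {E : Type*} {p q : E → ℝ≥0∞}

/-- The mass `∑ᵢ (pᵢ - qᵢ)⁺` by which the nonnegative vector `p` exceeds `q`; for probability
vectors it is half of the `ℓ¹` distance. Truncated subtraction in `ℝ≥0∞` is the positive part. -/
noncomputable def excess (p q : E → ℝ≥0∞) : ℝ≥0∞ := ∑' i, (p i - q i)

@[simp]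
lemma excess_zero_right (p : E → ℝ≥0∞) : excess p 0 = ∑' i, p i := by simp [excess]

lemma excess_le_tsum (p q : E → ℝ≥0∞) : excess p q ≤ ∑' i, p i :=
  ENNReal.tsum_le_tsum fun _ => tsub_le_self

lemma tsum_le_tsum_add_excess (p q : E → ℝ≥0∞) : ∑' i, p i ≤ ∑' i, q i + excess p q := by
  rw [excess, ← ENNReal.tsum_add]
  exact ENNReal.tsum_le_tsum fun _ => le_add_tsub

lemma excess_triangle (p q r : E → ℝ≥0∞) : excess p r ≤ excess p q + excess q r := by
  rw [excess, excess, excess, ← ENNReal.tsum_add]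
  exact ENNReal.tsum_le_tsum fun _ => tsub_le_tsub_add_tsub

lemma excess_smul_smul_le (c d : ℝ≥0) (q : E → ℝ≥0∞) :
    excess ((c : ℝ≥0∞) • q) ((d : ℝ≥0∞) • q) ≤ edist c d * ∑' i, q i := by
  rw [excess, ← ENNReal.tsum_mul_left]
  refine ENNReal.tsum_le_tsum fun i => ?_
  rw [Pi.smul_apply, Pi.smul_apply, smul_eq_mul, smul_eq_mul, tsub_le_iff_right, ← add_mul]
  gcongr
  rw [edist_nndist, ← ENNReal.coe_add, ENNReal.coe_le_coe, add_comm]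
  exact NNReal.le_add_nndist c d

lemma measurable_excess [Countable E] :
    Measurable fun x : (E → ℝ≥0∞) × (E → ℝ≥0∞) => excess x.1 x.2 :=
  Measurable.tsum fun i =>
    ((measurable_pi_apply i).comp measurable_fst).sub ((measurable_pi_apply i).comp measurable_snd)

lemma tendsto_excess_natCast_smul (hp : ∑' i, p i ≠ ∞) (hpq : ∀ i, q i = 0 → p i = 0) :
    Tendsto (fun k : ℕ => excess p ((k : ℝ≥0∞) • q)) atTop (𝓝 0) := by
  let _ : MeasurableSpace E := ⊤
  have hpoint (i) : Tendsto (fun k : ℕ => p i - k * q i) atTop (𝓝 0) := by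
    by_cases hq : q i = 0
    · simp [hq, hpq i hq]
    obtain ⟨k₀, hk₀⟩ := ENNReal.exists_nat_mul_gt hq (ENNReal.ne_top_of_tsum_ne_top hp i)
    refine tendsto_const_nhds.congr' ?_
    filter_upwards [eventually_ge_atTop k₀] with k hk
    exact (tsub_eq_zero_of_le (hk₀.le.trans (by gcongr))).symm
  simp_rw [excess, ← lintegral_count]
  simpa using tendsto_lintegral_of_dominated_convergence (μ := Measure.count) p
    (fun _ => measurable_from_top) (fun _ => ae_of_all _ fun _ => tsub_le_self)
    (by rwa [lintegral_count]) (ae_of_all _ hpoint)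

lemma excess_div_div (hp₀ : ∑' i, p i ≠ 0) (hp : ∑' i, p i ≠ ∞) (q : E → ℝ≥0∞) :
    excess (fun i => p i / ∑' j, p j) (fun i => q i / ∑' j, q j) =
      excess p (((∑' j, q j) / ∑' j, p j)⁻¹ • q) / ∑' j, p j := by
  rw [excess, excess, div_eq_mul_inv, ← ENNReal.tsum_mul_right]
  congr! 2 with i
  rw [ENNReal.sub_mul fun _ _ => ENNReal.inv_ne_top.2 hp₀, ENNReal.inv_div (.inl hp) (.inl hp₀),
    Pi.smul_apply, smul_eq_mul, div_eq_mul_inv, div_eq_mul_inv, div_eq_mul_inv]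
  congr 1
  rw [mul_right_comm, mul_right_comm _ _ (∑' j, p j)⁻¹, ENNReal.mul_inv_cancel hp₀ hp, one_mul,
    mul_comm]

lemma lipschitzWith_excess_smul_div {K : ℝ≥0} (hp₀ : ∑' i, p i ≠ 0) (hp : ∑' i, p i ≠ ∞)
    (hK : (∑' i, q i) / ∑' i, p i ≤ K) :
    LipschitzWith K fun c : ℝ≥0 => (excess p ((c : ℝ≥0∞) • q) / ∑' i, p i).toReal := by
  refine LipschitzWith.of_le_add_mul K fun c d => ?_
  have hfin (d : ℝ≥0) : excess p ((d : ℝ≥0∞) • q) / ∑' i, p i ≠ ∞ :=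
    ENNReal.div_ne_top (ne_top_of_le_ne_top hp (excess_le_tsum _ _)) hp₀
  have hle : excess p ((c : ℝ≥0∞) • q) / ∑' i, p i ≤
      excess p ((d : ℝ≥0∞) • q) / ∑' i, p i + K * edist c d := by
    calc excess p ((c : ℝ≥0∞) • q) / ∑' i, p i
        ≤ (excess p ((d : ℝ≥0∞) • q) + edist d c * ∑' i, q i) / ∑' i, p i := by
          gcongr
          exact (excess_triangle _ _ _).trans (by gcongr; exact excess_smul_smul_le d c q)
      _ = excess p ((d : ℝ≥0∞) • q) / ∑' i, p i + (∑' i, q i) / (∑' i, p i) * edist c d := by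
          rw [ENNReal.add_div, edist_comm, mul_comm (edist c d), ENNReal.mul_div_right_comm]
      _ ≤ excess p ((d : ℝ≥0∞) • q) / ∑' i, p i + K * edist c d := by gcongr
  have hKd : K * edist c d ≠ ∞ := ENNReal.mul_ne_top ENNReal.coe_ne_top (edist_ne_top c d)
  refine (ENNReal.toReal_mono (ENNReal.add_ne_top.2 ⟨hfin d, hKd⟩) hle).trans_eq ?_
  rw [ENNReal.toReal_add (hfin d) hKd, ENNReal.toReal_mul, ENNReal.coe_toReal, edist_dist,
    ENNReal.toReal_ofReal dist_nonneg]

lemma exists_tendsto_excess_div_div {p q : ℕ → E → ℝ≥0∞} {w : ℝ≥0} {s : Set ℝ≥0}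
    (hp₀ : ∀ n, ∑' i, p n i ≠ 0) (hp : ∀ n, ∑' i, p n i ≠ ∞) (hq : ∀ n, ∑' i, q n i ≠ ∞)
    (hw₀ : w ≠ 0) (hw : Tendsto (fun n => (∑' i, q n i) / ∑' i, p n i) atTop (𝓝 w))
    (hs : Dense s) (hlim : ∀ c ∈ s, ∃ L : ℝ≥0,
      Tendsto (fun n => excess (p n) ((c : ℝ≥0∞) • q n) / ∑' i, p n i) atTop (𝓝 L)) :
    ∃ L : ℝ, Tendsto (fun n => (excess (fun i => p n i / ∑' j, p n j)
      (fun i => q n i / ∑' j, q n j)).toReal) atTop (𝓝 L) := by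
  set W : ℕ → ℝ≥0∞ := fun n => (∑' i, q n i) / ∑' i, p n i
  have hW (n) : W n ≠ ∞ := ENNReal.div_ne_top (hq n) (hp₀ n)
  have hWlim : Tendsto (fun n => (W n).toNNReal) atTop (𝓝 w) := by
    exact (ENNReal.tendsto_toNNReal ENNReal.coe_ne_top).comp hw
  obtain ⟨K, hK⟩ := hWlim.bddAbove_range
  have hWK (n) : W n ≤ K := by
    rw [← ENNReal.coe_toNNReal (hW n)]
    exact ENNReal.coe_le_coe.2 (hK ⟨n, rfl⟩)
  obtain ⟨L, hL⟩ := exists_tendsto_apply_of_lipschitzWith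
    (fun n => lipschitzWith_excess_smul_div (hp₀ n) (hp n) (hWK n)) hs
    (fun c hc => (hlim c hc).imp' _ fun _ h => (ENNReal.tendsto_toReal ENNReal.coe_ne_top).comp h)
    (hWlim.inv₀ hw₀)
  refine ⟨L, hL.congr' ?_⟩
  filter_upwards [hw.eventually_ne (ENNReal.coe_ne_zero.2 hw₀)] with n hn
  rw [excess_div_div (hp₀ n) (hp n), ENNReal.coe_inv, ENNReal.coe_toNNReal (hW n)]
  exact ENNReal.toNNReal_ne_zero.2 ⟨hn, hW n⟩

end Excess

section MassIter

variable {E F : Type*} {N : F → E → E → ℝ≥0∞}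

/-- The row vector `p N(y)`. Taking values in `ℝ≥0∞` makes every product meaningful without
summability conditions. -/
noncomputable def massMul (N : F → E → E → ℝ≥0∞) (p : E → ℝ≥0∞) (y : F) : E → ℝ≥0∞ :=
  fun j => ∑' i, p i * N y i j

/-- The unnormalized filter `p N(y₁)⋯N(yₙ)`. -/
noncomputable def massIter (N : F → E → E → ℝ≥0∞) (p : E → ℝ≥0∞) :
    {n : ℕ} → (Fin n → F) → E → ℝ≥0∞
  | 0, _ => p
  | n + 1, v => massMul N (massIter N p (Fin.init v)) (v (Fin.last n))

lemma tsum_massMul (p : E → ℝ≥0∞) (y : F) :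
    ∑' j, massMul N p y j = ∑' i, p i * ∑' j, N y i j := by
  simp_rw [massMul, ← ENNReal.tsum_mul_left]
  exact ENNReal.tsum_comm

lemma massMul_smul (c : ℝ≥0∞) (p : E → ℝ≥0∞) (y : F) :
    massMul N (c • p) y = c • massMul N p y := by
  ext j
  simp [massMul, mul_assoc, ENNReal.tsum_mul_left]

lemma massIter_smul (c : ℝ≥0∞) (p : E → ℝ≥0∞) {n : ℕ} (v : Fin n → F) :
    massIter N (c • p) v = c • massIter N p v := by
  induction n with
  | zero => rfl
  | succ n ih => rw [massIter, ih, massMul_smul]; rfl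

lemma massIter_zero (v : Fin n → F) : massIter N 0 v = 0 := by
  simpa using massIter_smul (N := N) 0 0 v

lemma excess_massMul_le (p q : E → ℝ≥0∞) (y : F) :
    excess (massMul N p y) (massMul N q y) ≤ ∑' j, massMul N (p - q) y j := by
  refine ENNReal.tsum_le_tsum fun j => tsub_le_iff_right.2 ?_
  rw [massMul, massMul, massMul, ← ENNReal.tsum_add]
  refine ENNReal.tsum_le_tsum fun i => ?_
  rw [← add_mul]
  gcongr
  exact le_tsub_add

lemma massIter_apply_eq_zero {p q : E → ℝ≥0∞} (hpq : ∀ i, q i = 0 → p i = 0) {n : ℕ}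
    {v : Fin n → F} {j : E} (h : massIter N q v j = 0) : massIter N p v j = 0 := by
  induction n generalizing j with
  | zero => exact hpq j h
  | succ n ih =>
    simp only [massIter, massMul, ENNReal.tsum_eq_zero, mul_eq_zero] at h ⊢
    exact fun i => (h i).imp_left ih

lemma tsum_massIter_init_ne_zero {p : E → ℝ≥0∞} {n : ℕ} {v : Fin (n + 1) → F}
    (h : ∑' j, massIter N p v j ≠ 0) : ∑' j, massIter N p (Fin.init v) j ≠ 0 := by
  contrapose h
  rw [ENNReal.tsum_eq_zero] at h
  simp [massIter, tsum_massMul, h]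

variable [Countable E] [MeasurableSpace F]

lemma measurable_massMul (hN : Measurable N) :
    Measurable fun x : (E → ℝ≥0∞) × F => massMul N x.1 x.2 :=
  measurable_pi_lambda _ fun j => Measurable.tsum fun i =>
    ((measurable_pi_apply i).comp measurable_fst).mul <|
      (measurable_pi_apply j).comp <| (measurable_pi_apply i).comp <| hN.comp measurable_snd

lemma measurable_massIter (hN : Measurable N) (p : E → ℝ≥0∞) (n : ℕ) :
    Measurable fun v : Fin n → F => massIter N p v := by
  induction n with
  | zero => exact measurable_const
  | succ n ih =>
    exact (measurable_massMul hN).comp <|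
      (ih.comp (measurable_pi_lambda _ fun _ => measurable_pi_apply _)).prodMk
        (measurable_pi_apply _)

lemma measurable_tsum_massIter (hN : Measurable N) (p : E → ℝ≥0∞) (n : ℕ) :
    Measurable fun v : Fin n → F => ∑' j, massIter N p v j :=
  Measurable.tsum fun j => (measurable_pi_apply j).comp (measurable_massIter hN p n)

lemma measurable_excess_massIter (hN : Measurable N) (p q : E → ℝ≥0∞) (n : ℕ) :
    Measurable fun v : Fin n → F => excess (massIter N p v) (massIter N q v) :=
  measurable_excess.comp ((measurable_massIter hN p n).prodMk (measurable_massIter hN q n))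

variable {φ : Measure F}

lemma lintegral_excess_massMul_le (hN : Measurable N) (hrow : ∀ i, ∫⁻ y, ∑' j, N y i j ∂φ ≤ 1)
    (p q : E → ℝ≥0∞) :
    ∫⁻ y, excess (massMul N p y) (massMul N q y) ∂φ ≤ excess p q := by
  have hmeas (i) : Measurable fun y => ∑' j, N y i j := Measurable.tsum fun j =>
    (measurable_pi_apply j).comp ((measurable_pi_apply i).comp hN)
  calc ∫⁻ y, excess (massMul N p y) (massMul N q y) ∂φ
      ≤ ∫⁻ y, ∑' i, (p i - q i) * ∑' j, N y i j ∂φ := lintegral_mono fun y =>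
        (excess_massMul_le p q y).trans_eq (tsum_massMul _ y)
    _ = ∑' i, (p i - q i) * ∫⁻ y, ∑' j, N y i j ∂φ := by
        rw [lintegral_tsum fun i => ((hmeas i).const_mul _).aemeasurable]
        simp_rw [lintegral_const_mul _ (hmeas _)]
    _ ≤ ∑' i, (p i - q i) * 1 := by gcongr; exact hrow _
    _ = excess p q := by simp [excess]

variable [SigmaFinite φ]

lemma setLIntegral_excess_massIter_succ_le (hN : Measurable N)
    (hrow : ∀ i, ∫⁻ y, ∑' j, N y i j ∂φ ≤ 1) (p q : E → ℝ≥0∞) {n : ℕ} {A : Set (Fin n → F)}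
    (hA : MeasurableSet A) :
    ∫⁻ v in Fin.init ⁻¹' A, excess (massIter N p v) (massIter N q v)
        ∂(Measure.pi fun _ : Fin (n + 1) => φ) ≤
      ∫⁻ v in A, excess (massIter N p v) (massIter N q v) ∂(Measure.pi fun _ => φ) := by
  have hmeas : Measurable fun x : (Fin n → F) × F =>
      excess (massMul N (massIter N p x.1) x.2) (massMul N (massIter N q x.1) x.2) := by
    have hmul (r : E → ℝ≥0∞) := (measurable_massMul hN).comp
      (((measurable_massIter hN r n).comp measurable_fst).prodMk (measurable_snd (β := F)))
    exact measurable_excess.comp ((hmul p).prodMk (hmul q))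
  have hpre : (Fin.init ⁻¹' A : Set (Fin (n + 1) → F)) =
      (fun v => ((Fin.init v : Fin n → F), v (Fin.last n))) ⁻¹' (A ×ˢ Set.univ) := by
    ext; simp
  calc _ = ∫⁻ x in A ×ˢ Set.univ, excess (massMul N (massIter N p x.1) x.2)
          (massMul N (massIter N q x.1) x.2) ∂((Measure.pi fun _ : Fin n => φ).prod φ) := by
        rw [hpre]
        exact (measurePreserving_init_last φ n).setLIntegral_comp_preimage
          (hA.prod MeasurableSet.univ) hmeas
    _ = ∫⁻ v in A, ∫⁻ y, excess (massMul N (massIter N p v) y) (massMul N (massIter N q v) y) ∂φ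
          ∂(Measure.pi fun _ => φ) := by
        rw [setLIntegral_prod _ hmeas.aemeasurable, Measure.restrict_univ]
    _ ≤ _ := lintegral_mono fun v => lintegral_excess_massMul_le hN hrow _ _

lemma lintegral_excess_massIter_le (hN : Measurable N) (hrow : ∀ i, ∫⁻ y, ∑' j, N y i j ∂φ ≤ 1)
    (p q : E → ℝ≥0∞) (n : ℕ) :
    ∫⁻ v : Fin n → F, excess (massIter N p v) (massIter N q v) ∂(Measure.pi fun _ => φ) ≤
      excess p q := by
  induction n with
  | zero => simp [massIter]
  | succ n ih =>
    refine le_trans ?_ ih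
    simpa using setLIntegral_excess_massIter_succ_le hN hrow p q (n := n) MeasurableSet.univ

lemma ae_tsum_massIter_ne_top (hN : Measurable N) (hrow : ∀ i, ∫⁻ y, ∑' j, N y i j ∂φ ≤ 1)
    {p : E → ℝ≥0∞} (hp : ∑' i, p i ≠ ∞) (n : ℕ) :
    ∀ᵐ v ∂(Measure.pi fun _ : Fin n => φ), ∑' j, massIter N p v j ≠ ∞ := by
  have hle := lintegral_excess_massIter_le hN hrow p 0 n
  simp only [massIter_zero, excess_zero_right] at hle
  filter_upwards [ae_lt_top (measurable_tsum_massIter hN p n) (ne_top_of_le_ne_top hp hle)]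
    with v hv using hv.ne

end MassIter

section PathLaw

open scoped NNReal

variable {E F : Type*} {N : F → E → E → ℝ≥0∞} {p q : E → ℝ≥0∞}

/-- The first `n` observations of a path. -/
def pathPrefix (n : ℕ) (y : ℕ → F) : Fin n → F := fun k => y k

/-- The excess of one unnormalized filter over another, measured relative to the likelihood
`p N(y₁)⋯N(yₙ)1` of the observations; for `q = 0` this is the likelihood ratio of `r` to `p`. -/
noncomputable def excessRatio (N : F → E → E → ℝ≥0∞) (p r q : E → ℝ≥0∞) (n : ℕ) (y : ℕ → F) :
    ℝ≥0∞ :=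
  excess (massIter N r (pathPrefix n y)) (massIter N q (pathPrefix n y)) /
    ∑' j, massIter N p (pathPrefix n y) j

lemma one_le_natCast_mul_excessRatio_add (q : E → ℝ≥0∞) (k : ℕ) {n : ℕ} {y : ℕ → F}
    (hp₀ : ∑' j, massIter N p (pathPrefix n y) j ≠ 0)
    (hp : ∑' j, massIter N p (pathPrefix n y) j ≠ ∞) :
    1 ≤ k * excessRatio N p q 0 n y + excessRatio N p p ((k : ℝ≥0∞) • q) n y := by
  rw [excessRatio, excessRatio, massIter_smul, massIter_zero, excess_zero_right, ← mul_div_assoc,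
    ← ENNReal.add_div, ← ENNReal.div_self hp₀ hp]
  gcongr
  simpa [ENNReal.tsum_mul_left] using tsum_le_tsum_add_excess
    (massIter N p (pathPrefix n y)) ((k : ℝ≥0∞) • massIter N q (pathPrefix n y))

variable [MeasurableSpace F]

lemma measurable_pathPrefix (n : ℕ) : Measurable (pathPrefix (F := F) n) :=
  measurable_pi_lambda _ fun _ => measurable_pi_apply _

/-- The filtration generated by the observations; `seq n` knows `y 0, …, y (n - 1)`. -/
def prefixFiltration (F : Type*) [MeasurableSpace F] :
    Filtration ℕ (MeasurableSpace.pi : MeasurableSpace (ℕ → F)) where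
  seq n := MeasurableSpace.pi.comap (pathPrefix n)
  mono' m n hmn := by
    rintro _ ⟨A, hA, rfl⟩
    exact ⟨(fun v k => v (Fin.castLE hmn k)) ⁻¹' A,
      (measurable_pi_lambda _ fun _ => measurable_pi_apply _) hA, rfl⟩
  le' n := (measurable_pathPrefix n).comap_le

/-- `Q` is the law `Q_p` of the observation sequence started from `p`: on the first `n`
observations it has density `p N(y₁)⋯N(yₙ)1` with respect to `φⁿ`. -/
def IsPathLaw (N : F → E → E → ℝ≥0∞) (φ : Measure F) (p : E → ℝ≥0∞) (Q : Measure (ℕ → F)) :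
    Prop :=
  ∀ n, Q.map (pathPrefix n) =
    (Measure.pi fun _ : Fin n => φ).withDensity fun v => ∑' j, massIter N p v j

namespace IsPathLaw

variable {φ : Measure F} {Q : Measure (ℕ → F)}

lemma measure_univ [SigmaFinite φ] (hQ : IsPathLaw N φ p Q) : Q Set.univ = ∑' i, p i := by
  rw [← Set.preimage_univ (f := pathPrefix 0),
    ← Measure.map_apply (measurable_pathPrefix 0) MeasurableSet.univ, hQ 0]
  simp [massIter]

lemma ae_pathPrefix (hQ : IsPathLaw N φ p Q) {n : ℕ} {P : (Fin n → F) → Prop}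
    (hP : ∀ᵐ v ∂(Measure.pi fun _ => φ), P v) : ∀ᵐ y ∂Q, P (pathPrefix n y) := by
  refine ae_of_ae_map (measurable_pathPrefix n).aemeasurable ?_
  rw [hQ n]
  exact (withDensity_absolutelyContinuous _ _).ae_le hP

variable [Countable E]

lemma ae_tsum_massIter_ne_zero (hN : Measurable N) (hQ : IsPathLaw N φ p Q) :
    ∀ᵐ y ∂Q, ∀ n, ∑' j, massIter N p (pathPrefix n y) j ≠ 0 := by
  refine ae_all_iff.2 fun n => ?_
  refine ae_of_ae_map (p := fun v => ∑' j, massIter N p v j ≠ 0)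
    (measurable_pathPrefix n).aemeasurable ?_
  rw [hQ n, ae_withDensity_iff (measurable_tsum_massIter hN p n)]
  exact ae_of_all _ fun _ h => h

variable [SigmaFinite φ] (hN : Measurable N) (hrow : ∀ i, ∫⁻ y, ∑' j, N y i j ∂φ ≤ 1)
  (hp : ∑' i, p i ≠ ∞) (hQ : IsPathLaw N φ p Q)
include hN hrow hQ

lemma ae_tsum_massIter_ne_top (hq : ∑' i, q i ≠ ∞) :
    ∀ᵐ y ∂Q, ∀ n, ∑' j, massIter N q (pathPrefix n y) j ≠ ∞ :=
  ae_all_iff.2 fun n => hQ.ae_pathPrefix (_root_.ae_tsum_massIter_ne_top hN hrow hq n)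

include hp

lemma setLIntegral_excessRatio (r q : E → ℝ≥0∞) {n : ℕ} {A : Set (Fin n → F)}
    (hA : MeasurableSet A) :
    ∫⁻ y in pathPrefix n ⁻¹' A, excessRatio N p r q n y ∂Q =
      ∫⁻ v in A ∩ {v | ∑' j, massIter N p v j ≠ 0}, excess (massIter N r v) (massIter N q v)
        ∂(Measure.pi fun _ => φ) := by
  have hT := measurable_tsum_massIter hN p n
  have hD := measurable_excess_massIter hN r q n
  rw [← setLIntegral_div_withDensity hT hD (_root_.ae_tsum_massIter_ne_top hN hrow hp n) hA,
    ← hQ n]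
  exact (setLIntegral_map hA (hD.div hT) (measurable_pathPrefix n)).symm

lemma lintegral_excessRatio_le (r q : E → ℝ≥0∞) (n : ℕ) :
    ∫⁻ y, excessRatio N p r q n y ∂Q ≤ excess r q := by
  have h := hQ.setLIntegral_excessRatio hN hrow hp r q (n := n) MeasurableSet.univ
  rw [Set.preimage_univ, Measure.restrict_univ] at h
  exact h.trans_le ((setLIntegral_le_lintegral _ _).trans
    (lintegral_excess_massIter_le hN hrow r q n))

lemma setLIntegral_excessRatio_succ_le (r q : E → ℝ≥0∞) {n : ℕ} {A : Set (Fin n → F)}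
    (hA : MeasurableSet A) :
    ∫⁻ y in pathPrefix n ⁻¹' A, excessRatio N p r q (n + 1) y ∂Q ≤
      ∫⁻ y in pathPrefix n ⁻¹' A, excessRatio N p r q n y ∂Q := by
  have hinit : Measurable (Fin.init : (Fin (n + 1) → F) → Fin n → F) :=
    measurable_pi_lambda _ fun _ => measurable_pi_apply _
  have hsupp : MeasurableSet {v : Fin n → F | ∑' j, massIter N p v j ≠ 0} :=
    (measurable_tsum_massIter hN p n (measurableSet_singleton 0)).compl
  calc ∫⁻ y in pathPrefix n ⁻¹' A, excessRatio N p r q (n + 1) y ∂Q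
      = ∫⁻ v in Fin.init ⁻¹' A ∩ {v | ∑' j, massIter N p v j ≠ 0},
          excess (massIter N r v) (massIter N q v) ∂(Measure.pi fun _ => φ) :=
        hQ.setLIntegral_excessRatio hN hrow hp r q (hinit hA)
    _ ≤ ∫⁻ v in Fin.init ⁻¹' (A ∩ {v | ∑' j, massIter N p v j ≠ 0}),
          excess (massIter N r v) (massIter N q v) ∂(Measure.pi fun _ => φ) :=
        lintegral_mono_set fun v hv => ⟨hv.1, tsum_massIter_init_ne_zero hv.2⟩
    _ ≤ ∫⁻ v in A ∩ {v | ∑' j, massIter N p v j ≠ 0},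
          excess (massIter N r v) (massIter N q v) ∂(Measure.pi fun _ => φ) :=
        setLIntegral_excess_massIter_succ_le hN hrow r q (hA.inter hsupp)
    _ = ∫⁻ y in pathPrefix n ⁻¹' A, excessRatio N p r q n y ∂Q :=
        (hQ.setLIntegral_excessRatio hN hrow hp r q hA).symm

lemma ae_exists_tendsto_excessRatio {r q : E → ℝ≥0∞} (hrq : excess r q ≠ ∞) :
    ∀ᵐ y ∂Q, ∃ L : ℝ≥0, Tendsto (fun n => excessRatio N p r q n y) atTop (𝓝 L) := by
  have : IsFiniteMeasure Q := ⟨by rw [hQ.measure_univ]; exact hp.lt_top⟩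
  refine ae_exists_tendsto_of_setLIntegral_succ_le (ℱ := prefixFiltration F) (fun n => ?_)
    (ne_top_of_le_ne_top hrq (hQ.lintegral_excessRatio_le hN hrow hp r q 0)) ?_
  · exact ((measurable_excess_massIter hN r q n).div (measurable_tsum_massIter hN p n)).comp
      (comap_measurable (pathPrefix n))
  · rintro n _ ⟨A, hA, rfl⟩
    exact hQ.setLIntegral_excessRatio_succ_le hN hrow hp r q hA

lemma ae_iInf_liminf_excessRatio_natCast_smul (hpq : ∀ i, q i = 0 → p i = 0) :
    ∀ᵐ y ∂Q, ⨅ k : ℕ, liminf (fun n => excessRatio N p p ((k : ℝ≥0∞) • q) n y) atTop = 0 := by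
  have hmeas (k n : ℕ) : Measurable (excessRatio N p p ((k : ℝ≥0∞) • q) n) :=
    ((measurable_excess_massIter hN _ _ n).div (measurable_tsum_massIter hN p n)).comp
      (measurable_pathPrefix n)
  refine (lintegral_eq_zero_iff (Measurable.iInf fun k => Measurable.liminf (hmeas k))).1 ?_
  refine le_antisymm (ge_of_tendsto' (tendsto_excess_natCast_smul hp hpq) fun k => ?_) zero_le
  calc ∫⁻ y, ⨅ k : ℕ, liminf (fun n => excessRatio N p p ((k : ℝ≥0∞) • q) n y) atTop ∂Q
      ≤ ∫⁻ y, liminf (fun n => excessRatio N p p ((k : ℝ≥0∞) • q) n y) atTop ∂Q :=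
        lintegral_mono fun y => iInf_le _ k
    _ ≤ liminf (fun n => ∫⁻ y, excessRatio N p p ((k : ℝ≥0∞) • q) n y ∂Q) atTop :=
        lintegral_liminf_le (hmeas k)
    _ ≤ liminf (fun _ => excess p ((k : ℝ≥0∞) • q)) atTop := liminf_le_liminf <|
        Eventually.of_forall fun n => hQ.lintegral_excessRatio_le hN hrow hp _ _ n
    _ = excess p ((k : ℝ≥0∞) • q) := by simp

lemma ae_not_tendsto_excessRatio_zero (hpq : ∀ i, q i = 0 → p i = 0) :
    ∀ᵐ y ∂Q, ¬ Tendsto (fun n => excessRatio N p q 0 n y) atTop (𝓝 0) := by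
  filter_upwards [hQ.ae_iInf_liminf_excessRatio_natCast_smul hN hrow hp hpq,
    hQ.ae_tsum_massIter_ne_zero hN, hQ.ae_tsum_massIter_ne_top hN hrow hp] with y hy hp₀ hptop hW
  have hone (k : ℕ) : 1 ≤ liminf (fun n => excessRatio N p p ((k : ℝ≥0∞) • q) n y) atTop := by
    have hlim : Tendsto (fun n => 1 - k * excessRatio N p q 0 n y) atTop (𝓝 1) := by
      simpa using ENNReal.Tendsto.sub tendsto_const_nhds
        (ENNReal.Tendsto.const_mul hW (.inr (ENNReal.natCast_ne_top k))) (.inl ENNReal.one_ne_top)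
    rw [← hlim.liminf_eq]
    exact liminf_le_liminf <| Eventually.of_forall fun n =>
      tsub_le_iff_left.2 (one_le_natCast_mul_excessRatio_add q k (hp₀ n) (hptop n))
  exact absurd (le_iInf hone) (by simp [hy])

theorem ae_exists_tendsto_excess_filter (hq : ∑' i, q i ≠ ∞) (hpq : ∀ i, q i = 0 → p i = 0) :
    ∀ᵐ y ∂Q, ∃ L : ℝ, Tendsto (fun n => (excess
      (fun i => massIter N p (pathPrefix n y) i / ∑' j, massIter N p (pathPrefix n y) j)
      (fun i => massIter N q (pathPrefix n y) i / ∑' j, massIter N q (pathPrefix n y) j)).toReal)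
      atTop (𝓝 L) := by
  have hdense : ∀ᵐ y ∂Q, ∀ k, ∃ L : ℝ≥0, Tendsto
      (fun n => excessRatio N p p ((TopologicalSpace.denseSeq ℝ≥0 k : ℝ≥0∞) • q) n y) atTop (𝓝 L) :=
    ae_all_iff.2 fun k => hQ.ae_exists_tendsto_excessRatio hN hrow hp
      (ne_top_of_le_ne_top hp (excess_le_tsum _ _))
  filter_upwards [hdense, hQ.ae_not_tendsto_excessRatio_zero hN hrow hp hpq,
    hQ.ae_exists_tendsto_excessRatio (r := q) (q := 0) hN hrow hp (by simpa using hq),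
    hQ.ae_tsum_massIter_ne_zero hN, hQ.ae_tsum_massIter_ne_top hN hrow hp,
    hQ.ae_tsum_massIter_ne_top hN hrow hq] with y hy hne ⟨w, hw⟩ hp₀ hptop hqtop
  have hw₀ : w ≠ 0 := by
    rintro rfl
    exact hne (by simpa using hw)
  simp only [excessRatio, massIter_zero, massIter_smul, excess_zero_right] at hw hy
  exact exists_tendsto_excess_div_div hp₀ hptop hqtop hw₀ hw
    (TopologicalSpace.denseRange_denseSeq ℝ≥0) (Set.forall_mem_range.2 hy)

end IsPathLaw

end PathLaw

section RealValued

variable {E F : Type*} {M : F → E → E → ℝ}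

/-- The entries of a probability vector, as extended nonnegative reals. -/
noncomputable def ProbVec.toENNReal (μ : ProbVec E) : E → ℝ≥0∞ :=
  fun i => ENNReal.ofReal ((μ : E → ℝ) i)

lemma ProbVec.tsum_toENNReal (μ : ProbVec E) : ∑' i, μ.toENNReal i = 1 := by
  simp only [ProbVec.toENNReal]
  rw [← ENNReal.ofReal_tsum_of_nonneg μ.2.1 μ.2.2.summable, μ.2.2.tsum_eq, ENNReal.ofReal_one]

lemma ProbVec.tsum_toENNReal_ne_top (μ : ProbVec E) : ∑' i, μ.toENNReal i ≠ ∞ :=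
  μ.tsum_toENNReal.trans_ne ENNReal.one_ne_top

/-- The point mass at `i`. -/
noncomputable def ProbVec.single [DecidableEq E] (i : E) : ProbVec E :=
  ⟨Pi.single i (1 : ℝ), fun j => by rw [Pi.single_apply]; positivity, hasSum_pi_single i 1⟩

lemma tvDist_eq_two_mul_excess (μ ν : ProbVec E) :
    tvDist μ ν = 2 * (excess μ.toENNReal ν.toENNReal).toReal := by
  have hdiff : HasSum (fun i => (μ : E → ℝ) i - (ν : E → ℝ) i) 0 := by
    simpa using μ.2.2.sub ν.2.2
  have hterm (i) : (μ.toENNReal i - ν.toENNReal i).toReal =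
      max ((μ : E → ℝ) i - (ν : E → ℝ) i) 0 := by
    rw [ProbVec.toENNReal, ProbVec.toENNReal, ← ENNReal.ofReal_sub _ (ν.2.1 i),
      ENNReal.toReal_ofReal']
  have hfin : excess μ.toENNReal ν.toENNReal ≠ ∞ :=
    ne_top_of_le_ne_top ENNReal.one_ne_top ((excess_le_tsum _ _).trans_eq μ.tsum_toENNReal)
  have hpos : HasSum (fun i => max ((μ : E → ℝ) i - (ν : E → ℝ) i) 0)
      (excess μ.toENNReal ν.toENNReal).toReal := by
    rw [excess, ENNReal.tsum_toReal_eq (ENNReal.ne_top_of_tsum_ne_top hfin)]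
    simpa only [hterm] using ENNReal.hasSum_toReal hfin
  have habs (a : ℝ) : |a| = 2 * max a 0 - a := by
    linarith [max_zero_sub_eq_self a, max_zero_add_max_neg_zero_eq_abs_self a]
  simp only [tvDist, habs]
  simpa using ((hpos.mul_left 2).sub hdiff).tsum_eq

/-- The entries of a matrix-valued map, as extended nonnegative reals. -/
noncomputable def toENNRealMat (M : F → E → E → ℝ) : F → E → E → ℝ≥0∞ :=
  fun y i j => ENNReal.ofReal (M y i j)

lemma rowMul_toReal (hMnn : ∀ y i j, 0 ≤ M y i j) {m : E → ℝ≥0∞} (hm : ∀ i, m i ≠ ∞) (y : F) :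
    rowMul M (fun i => (m i).toReal) y = fun j => (massMul (toENNRealMat M) m y j).toReal := by
  ext j
  simp only [rowMul, massMul, toENNRealMat]
  rw [ENNReal.tsum_toReal_eq fun i => ENNReal.mul_ne_top (hm i) ENNReal.ofReal_ne_top]
  simp [hMnn]

lemma ofReal_rowTot_toReal {m : E → ℝ≥0∞} (hm : ∑' j, m j ≠ ∞) :
    ENNReal.ofReal (rowTot fun j => (m j).toReal) = ∑' j, m j := by
  rw [rowTot, ← ENNReal.tsum_toReal_eq (ENNReal.ne_top_of_tsum_ne_top hm), ENNReal.ofReal_toReal hm]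

lemma toENNReal_filterList {μ : ProbVec E} {ys : List F} {m : E → ℝ≥0∞} (hm₀ : ∑' j, m j ≠ 0)
    (hm : ∑' j, m j ≠ ∞) (hrow : rowIter M μ ys = fun j => (m j).toReal) :
    (filterList M μ ys).toENNReal = fun j => m j / ∑' i, m i := by
  have htot : rowTot (rowIter M μ ys) = (∑' i, m i).toReal := by
    rw [hrow, rowTot, ENNReal.tsum_toReal_eq (ENNReal.ne_top_of_tsum_ne_top hm)]
  have htot₀ : (∑' i, m i).toReal ≠ 0 := ENNReal.toReal_ne_zero.2 ⟨hm₀, hm⟩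
  have hsum : ∑' j, m j / ∑' i, m i = 1 := by
    simp_rw [div_eq_mul_inv]
    rw [ENNReal.tsum_mul_right, ENNReal.mul_inv_cancel hm₀ hm]
  have hratio (j) : m j / ∑' i, m i ≠ ∞ :=
    ENNReal.div_ne_top (ENNReal.ne_top_of_tsum_ne_top hm j) hm₀
  have hhas : HasSum (fun j => (m j / ∑' i, m i).toReal) 1 := by
    rw [← ENNReal.toReal_one, ← hsum, ENNReal.tsum_toReal_eq hratio]
    exact ENNReal.hasSum_toReal (by simp [hsum])
  have hex : ∃ π : ProbVec E, ∀ j,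
      (π : E → ℝ) j * rowTot (rowIter M μ ys) = rowIter M μ ys j := by
    refine ⟨⟨fun j => (m j / ∑' i, m i).toReal, fun _ => ENNReal.toReal_nonneg, hhas⟩, fun j => ?_⟩
    simp only [htot, ENNReal.toReal_div]
    rw [div_mul_cancel₀ _ htot₀, hrow]
  ext j
  have hj : (filterList M μ ys : E → ℝ) j = (m j / ∑' i, m i).toReal := by
    rw [ENNReal.toReal_div, eq_div_iff htot₀, ← htot, filterList, dif_pos hex]
    exact (hex.choose_spec j).trans (congrFun hrow j)
  rw [ProbVec.toENNReal, hj, ENNReal.ofReal_toReal (hratio j)]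

variable [MeasurableSpace F]

lemma measurable_toENNRealMat [Countable E] (hMmeas : ∀ i j, Measurable fun y => M y i j) :
    Measurable (toENNRealMat M) :=
  measurable_pi_lambda _ fun i => measurable_pi_lambda _ fun j => (hMmeas i j).ennreal_ofReal

variable {φ : Measure F}

lemma lintegral_rowTot_rowIter_single [DecidableEq E] (hMnn : ∀ y i j, 0 ≤ M y i j) {i : E}
    (hsum : ∀ᵐ y ∂φ, Summable (M y i)) :
    ∫⁻ v, ENNReal.ofReal (rowTot (rowIter M (ProbVec.single i) (List.ofFn v)))
        ∂(Measure.pi fun _ : Fin 1 => φ) =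
      ∫⁻ y, ∑' j, toENNRealMat M y i j ∂φ := by
  have hone (v : Fin 1 → F) : rowIter M (ProbVec.single i) (List.ofFn v) = M (v 0) i := by
    ext j
    simp [rowIter, rowMul, ProbVec.single, Pi.single_apply]
  calc ∫⁻ v, ENNReal.ofReal (rowTot (rowIter M (ProbVec.single i) (List.ofFn v)))
        ∂(Measure.pi fun _ : Fin 1 => φ)
      = ∫⁻ v, ENNReal.ofReal (rowTot (M (v 0) i)) ∂(Measure.pi fun _ : Fin 1 => φ) := by
        simp only [hone]
    _ = ∫⁻ y, ENNReal.ofReal (rowTot (M y i)) ∂φ :=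
        (measurePreserving_funUnique φ (Fin 1)).lintegral_comp_emb
          (MeasurableEquiv.measurableEmbedding _)
          fun y => ENNReal.ofReal (rowTot (M y i))
    _ = ∫⁻ y, ∑' j, toENNRealMat M y i j ∂φ := by
        refine lintegral_congr_ae ?_
        filter_upwards [hsum] with y hy using ENNReal.ofReal_tsum_of_nonneg (hMnn y i) hy

variable [SigmaFinite φ] [Countable E] (hMmeas : ∀ i j, Measurable fun y => M y i j)
  (hMnn : ∀ y i j, 0 ≤ M y i j) (hrow : ∀ i, ∫⁻ y, ∑' j, toENNRealMat M y i j ∂φ ≤ 1)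
include hMmeas hMnn hrow

lemma ae_rowIter_ofFn (μ : ProbVec E) (n : ℕ) :
    ∀ᵐ v ∂(Measure.pi fun _ : Fin n => φ),
      rowIter M μ (List.ofFn v) = fun j => (massIter (toENNRealMat M) μ.toENNReal v j).toReal := by
  induction n with
  | zero =>
    refine ae_of_all _ fun v => ?_
    ext j
    simp [rowIter, massIter, ProbVec.toENNReal, μ.2.1 j]
  | succ n ih =>
    have hinit : Measure.QuasiMeasurePreserving (Fin.init : (Fin (n + 1) → F) → Fin n → F)
        (Measure.pi fun _ => φ) (Measure.pi fun _ => φ) :=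
      Measure.quasiMeasurePreserving_fst.comp
        (measurePreserving_init_last φ n).quasiMeasurePreserving
    have hfin := ae_tsum_massIter_ne_top (measurable_toENNRealMat hMmeas) hrow
      μ.tsum_toENNReal_ne_top n
    filter_upwards [hinit.ae ih, hinit.ae hfin] with v hv hvfin
    rw [rowIter] at hv
    rw [rowIter, List.ofFn_succ', List.concat_eq_append, List.foldl_append]
    exact (congrArg (rowMul M · (v (Fin.last n))) hv).trans
      (rowMul_toReal hMnn (ENNReal.ne_top_of_tsum_ne_top hvfin) _)

lemma isPathLaw_toENNReal {μ : ProbVec E} {Q : Measure (ℕ → F)}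
    (hQ : ∀ (n : ℕ) (A : Set (Fin n → F)), MeasurableSet A →
      Q {y : ℕ → F | (fun k : Fin n => y k) ∈ A} =
        ∫⁻ v in A, ENNReal.ofReal (rowTot (rowIter M (μ : E → ℝ) (List.ofFn v)))
          ∂(Measure.pi fun _ => φ)) :
    IsPathLaw (toENNRealMat M) φ μ.toENNReal Q := by
  refine fun n => Measure.ext fun A hA => ?_
  rw [Measure.map_apply (measurable_pathPrefix n) hA, withDensity_apply _ hA]
  refine (hQ n A hA).trans (lintegral_congr_ae (ae_restrict_of_ae ?_))
  filter_upwards [ae_rowIter_ofFn hMmeas hMnn hrow μ n,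
    ae_tsum_massIter_ne_top (measurable_toENNRealMat hMmeas) hrow
      μ.tsum_toENNReal_ne_top n] with v hv hvfin
  rw [hv, ofReal_rowTot_toReal hvfin]

lemma ae_toENNReal_filterSeq {p : E → ℝ≥0∞} {ν : ProbVec E}
    (hpν : ∀ i, ν.toENNReal i = 0 → p i = 0) {Q : Measure (ℕ → F)}
    (hQ : IsPathLaw (toENNRealMat M) φ p Q) :
    ∀ᵐ y ∂Q, ∀ n, (filterSeq M ν y n).toENNReal = fun i =>
      massIter (toENNRealMat M) ν.toENNReal (pathPrefix n y) i /
        ∑' j, massIter (toENNRealMat M) ν.toENNReal (pathPrefix n y) j := by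
  have hN := measurable_toENNRealMat hMmeas
  filter_upwards [hQ.ae_tsum_massIter_ne_zero hN,
    hQ.ae_tsum_massIter_ne_top hN hrow ν.tsum_toENNReal_ne_top,
    ae_all_iff.2 fun n => hQ.ae_pathPrefix (ae_rowIter_ofFn hMmeas hMnn hrow ν n)]
    with y hp₀ hνtop hν n
  refine toENNReal_filterList (fun h => hp₀ n ?_) (hνtop n) (hν n)
  rw [ENNReal.tsum_eq_zero] at h ⊢
  exact fun j => massIter_apply_eq_zero hpν (h j)

end RealValued

theorem tvDist_filter_tendsto_limit_general {E : Type*} [Countable E] {F : Type*}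
    [MeasurableSpace F] (φ : Measure F) [SigmaFinite φ] (M : F → E → E → ℝ)
    (hMmeas : ∀ i j, Measurable fun y => M y i j) (hMnn : ∀ y i j, 0 ≤ M y i j)
    (hrow : ∀ i, ∫⁻ y, ∑' j, ENNReal.ofReal (M y i j) ∂φ ≤ 1) {μ ν : ProbVec E}
    (hμν : ∀ i, (ν : E → ℝ) i = 0 → (μ : E → ℝ) i = 0) (Q : Measure (ℕ → F))
    (hQ : ∀ (n : ℕ) (A : Set (Fin n → F)), MeasurableSet A →
      Q {y : ℕ → F | (fun k : Fin n => y k) ∈ A} =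
        ∫⁻ v in A, ENNReal.ofReal (rowTot (rowIter M (μ : E → ℝ) (List.ofFn v)))
          ∂(Measure.pi fun _ => φ)) :
    ∀ᵐ y ∂Q, ∃ L : ℝ,
      Tendsto (fun n => tvDist (filterSeq M μ y n) (filterSeq M ν y n)) atTop (𝓝 L) := by
  have hlaw := isPathLaw_toENNReal hMmeas hMnn hrow hQ
  have hac (i) (h : ν.toENNReal i = 0) : μ.toENNReal i = 0 := by
    have hν : (ν : E → ℝ) i = 0 := (ENNReal.ofReal_eq_zero.1 h).antisymm (ν.2.1 i)
    simp [ProbVec.toENNReal, hμν i hν]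
  filter_upwards [
    hlaw.ae_exists_tendsto_excess_filter (measurable_toENNRealMat hMmeas) hrow
      μ.tsum_toENNReal_ne_top
      ν.tsum_toENNReal_ne_top hac,
    ae_toENNReal_filterSeq hMmeas hMnn hrow (fun _ => id) hlaw,
    ae_toENNReal_filterSeq hMmeas hMnn hrow hac hlaw] with y ⟨L, hL⟩ hμ hν
  refine ⟨2 * L, (hL.const_mul 2).congr fun n => ?_⟩
  rw [tvDist_eq_two_mul_excess, hμ n, hν n]

/-- For all `μ ≪ ν` in `P(E)`, the limit `lim_n ‖π_n^μ − π_n^ν‖` exists for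
`Q_μ`-a.e. observation path. -/
theorem tvDist_filter_tendsto_limit
    {E : Type*} [Countable E] [Nonempty E] [DecidableEq E]
    {F : Type*} [TopologicalSpace F] [PolishSpace F] [MeasurableSpace F] [BorelSpace F]
    (φ : Measure F) [SigmaFinite φ]
    (M : F → E → E → ℝ)
    (hMmeas : ∀ i j, Measurable fun y => M y i j)
    (hMnn : ∀ y i j, 0 ≤ M y i j)
    (hMbd : ∀ᵐ y ∂φ, ∃ C : ℝ, ∀ (i : E) (s : Finset E), ∑ j ∈ s, M y i j ≤ C)
    (hPtrans : ∀ i, HasSum (fun j => transMat M φ i j) 1)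
    (hPirr : ∀ i j : E, ∃ n : ℕ, 0 < matPow (transMat M φ) n i j)
    (lam : ProbVec E)
    (hlamInv : ∀ j, ∑' i, (lam : E → ℝ) i * transMat M φ i j = (lam : E → ℝ) j)
    (hlamUniq : ∀ ρ : ProbVec E,
      (∀ j, ∑' i, (ρ : E → ℝ) i * transMat M φ i j = (ρ : E → ℝ) j) → ρ = lam)
    (Q : ProbVec E → Measure (ℕ → F))
    (hQprob : ∀ μ, IsProbabilityMeasure (Q μ))
    (hQ : ∀ (μ : ProbVec E) (n : ℕ) (A : Set (Fin n → F)), MeasurableSet A →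
      Q μ {y : ℕ → F | (fun k : Fin n => y k) ∈ A} =
        ∫⁻ v in A, ENNReal.ofReal (rowTot (rowIter M (μ : E → ℝ) (List.ofFn v)))
          ∂(Measure.pi fun _ => φ))
    :
    ∀ μ ν : ProbVec E, (∀ i : E, (ν : E → ℝ) i = 0 → (μ : E → ℝ) i = 0) →
      ∀ᵐ y ∂(Q μ), ∃ L : ℝ,
        Tendsto (fun n : ℕ => tvDist (filterSeq M μ y n) (filterSeq M ν y n))
          atTop (nhds L) := by
  intro μ ν hμν
  have hsum (i) : ∀ᵐ y ∂φ, Summable (M y i) := by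
    filter_upwards [hMbd] with y ⟨C, hC⟩ using summable_of_sum_le (hMnn y i) (hC i)
  have hrow (i) : ∫⁻ y, ∑' j, toENNRealMat M y i j ∂φ = 1 := by
    rw [← lintegral_rowTot_rowIter_single hMnn (hsum i)]
    simpa using (hQ (ProbVec.single i) 1 Set.univ MeasurableSet.univ).symm
  exact tvDist_filter_tendsto_limit_general φ M hMmeas hMnn (fun i => (hrow i).le) hμν (Q μ) (hQ μ)
end

section
/- Let (Ξ, 𝒳) be a measurable space with a filtration (𝒳_n)_{n∈ℕ}, let Φ be a probability measure on (Ξ, 𝒳), and let Q, Q′ be probability measures on (Ξ, 𝒳) that are mutually singular on 𝒳_∞ := σ(⋃_n 𝒳_n). Suppose that for every n the restrictions satisfy Q|_{𝒳_n} ≪ Φ|_{𝒳_n} and Q′|_{𝒳_n} ≪ Φ|_{𝒳_n}, with densities q_n and q′_n respectively. Then q_n/q′_n → 0 as n → ∞, Q′-almost surely (the ratio being Q′-a.s. well-defined since q′_n > 0 Q′-a.s. for each n). -/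
/-!
The density ratio `q_n / q'_n` is the Radon–Nikodym derivative of `Q|𝒳_n` with respect to `Q'|𝒳_n`.
Densities with respect to `Q + Q'` are conditional expectations, so Lévy's upward theorem makes them
converge. Taking quotients, `q_n / q'_n` converges `Q'`-a.s. to the derivative of the absolutely
continuous part of `Q` with respect to `Q'` on `𝒳_∞`, which vanishes under mutual singularity.
-/

open MeasureTheory Filter Topology ENNReal

section RadonNikodym

variable {α : Type*} {mα : MeasurableSpace α}

lemma ae_ne_top_of_sigmaFinite_withDensity {ρ : Measure α} {f : α → ℝ≥0∞}
    (hf : Measurable f) [SigmaFinite (ρ.withDensity f)] : ∀ᵐ x ∂ρ, f x ≠ ∞ := by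
  let s := spanningSets (ρ.withDensity f)
  have hrestrict (n : ℕ) : ∀ᵐ x ∂ρ.restrict (s n), f x ≠ ∞ := by
    have hint : ∫⁻ x in s n, f x ∂ρ ≠ ∞ := by
      rw [← withDensity_apply f (measurableSet_spanningSets _ n)]
      exact (measure_spanningSets_lt_top _ n).ne
    exact (ae_lt_top hf hint).mono fun _ hx => hx.ne
  rw [← ρ.restrict_univ, ← iUnion_spanningSets (ρ.withDensity f), ae_restrict_iUnion_iff]
  exact hrestrict

lemma rnDeriv_withDensity_withDensity (ρ : Measure α) {f g : α → ℝ≥0∞}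
    (hf : Measurable f) (hg : Measurable g) [SigmaFinite (ρ.withDensity g)] :
    (ρ.withDensity f).rnDeriv (ρ.withDensity g) =ᵐ[ρ.withDensity g] f / g := by
  let t := {x | g x = 0}
  have ht : MeasurableSet t := hg (measurableSet_singleton 0)
  have hsing : (ρ.withDensity f).restrict t ⟂ₘ ρ.withDensity g := by
    refine ⟨tᶜ, ht.compl, by simp [Measure.restrict_apply ht.compl], ?_⟩
    rw [compl_compl, withDensity_apply _ ht]
    exact setLIntegral_eq_zero ht fun _ hx => hx
  have hac : (ρ.withDensity g).withDensity (f / g) = (ρ.withDensity f).restrict tᶜ := by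
    rw [← withDensity_mul ρ hg (hf.div hg), restrict_withDensity ht.compl,
      ← withDensity_indicator ht.compl]
    refine withDensity_congr_ae ?_
    filter_upwards [ae_ne_top_of_sigmaFinite_withDensity hg] with x hx
    by_cases h0 : g x = 0
    · simp [t, h0]
    · simp [t, h0, ENNReal.mul_div_cancel h0 hx]
  refine (Measure.eq_rnDeriv (hf.div hg) hsing ?_).symm
  rw [hac, Measure.restrict_add_restrict_compl ht]

lemma rnDeriv_ae_eq_rnDeriv_div_rnDeriv {μ ν σ : Measure α} [SFinite μ] [SigmaFinite ν]
    [SigmaFinite σ] (hμ : μ ≪ σ) (hν : ν ≪ σ) :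
    μ.rnDeriv ν =ᵐ[ν] μ.rnDeriv σ / ν.rnDeriv σ := by
  have : SigmaFinite (σ.withDensity (ν.rnDeriv σ)) := by
    rwa [Measure.withDensity_rnDeriv_eq ν σ hν]
  have h := rnDeriv_withDensity_withDensity σ (μ.measurable_rnDeriv σ) (ν.measurable_rnDeriv σ)
  rwa [Measure.withDensity_rnDeriv_eq μ σ hμ, Measure.withDensity_rnDeriv_eq ν σ hν] at h

end RadonNikodym

section Filtration

variable {Ω : Type*} {mΩ : MeasurableSpace Ω} (𝓕 : Filtration ℕ mΩ)

lemma ae_tendsto_rnDeriv_trim_of_absolutelyContinuous {μ ν : Measure Ω} [IsFiniteMeasure μ]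
    [IsFiniteMeasure ν] (hμν : μ ≪ ν) :
    ∀ᵐ x ∂ν, Tendsto (fun n => (μ.trim (𝓕.le n)).rnDeriv (ν.trim (𝓕.le n)) x) atTop
      (𝓝 ((μ.trim (iSup_le 𝓕.le)).rnDeriv (ν.trim (iSup_le 𝓕.le)) x)) := by
  have hcondExp : ∀ᵐ x ∂ν, ∀ n, (μ.trim (𝓕.le n)).rnDeriv (ν.trim (𝓕.le n)) x =
      ENNReal.ofReal (ν[fun y => (μ.rnDeriv ν y).toReal | 𝓕 n] x) :=
    ae_all_iff.2 fun n => ae_of_ae_trim (𝓕.le n) (rnDeriv_trim (𝓕.le n) hμν)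
  filter_upwards [hcondExp, ae_of_ae_trim _ (rnDeriv_trim (iSup_le 𝓕.le) hμν),
    tendsto_ae_condExp (ℱ := 𝓕) (μ := ν) fun y => (μ.rnDeriv ν y).toReal] with x hn h_iSup hlim
  simpa only [hn, h_iSup] using ENNReal.tendsto_ofReal hlim

lemma ae_tendsto_rnDeriv_trim (μ ν : Measure Ω) [IsFiniteMeasure μ] [IsFiniteMeasure ν] :
    ∀ᵐ x ∂ν, Tendsto (fun n => (μ.trim (𝓕.le n)).rnDeriv (ν.trim (𝓕.le n)) x) atTop
      (𝓝 ((μ.trim (iSup_le 𝓕.le)).rnDeriv (ν.trim (iSup_le 𝓕.le)) x)) := by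
  let σ := μ + ν
  have hμ : μ ≪ σ := Measure.absolutelyContinuous_of_le (Measure.le_add_right le_rfl)
  have hν : ν ≪ σ := Measure.absolutelyContinuous_of_le (Measure.le_add_left le_rfl)
  have hquot {m₀ : MeasurableSpace Ω} (hm₀ : m₀ ≤ mΩ) :
      ∀ᵐ x ∂ν, (μ.trim hm₀).rnDeriv (ν.trim hm₀) x =
        (μ.trim hm₀).rnDeriv (σ.trim hm₀) x / (ν.trim hm₀).rnDeriv (σ.trim hm₀) x :=
    ae_of_ae_trim hm₀ (rnDeriv_ae_eq_rnDeriv_div_rnDeriv (hμ.trim hm₀) (hν.trim hm₀))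
  have hpos := ae_of_ae_trim _ (Measure.rnDeriv_pos (hν.trim (iSup_le 𝓕.le)))
  have hfin := hν.ae_le (ae_of_ae_trim _ (Measure.rnDeriv_ne_top (ν.trim (iSup_le 𝓕.le))
    (σ.trim (iSup_le 𝓕.le))))
  filter_upwards [ae_all_iff.2 fun n => hquot (𝓕.le n), hquot (iSup_le 𝓕.le), hpos, hfin,
    hν.ae_le (ae_tendsto_rnDeriv_trim_of_absolutelyContinuous 𝓕 hμ),
    hν.ae_le (ae_tendsto_rnDeriv_trim_of_absolutelyContinuous 𝓕 hν)]
    with x hn h_iSup h0 htop hμlim hνlim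
  simpa only [hn, h_iSup] using ENNReal.Tendsto.div hμlim (Or.inr h0.ne') hνlim (Or.inl htop)

lemma ae_tendsto_density_div_density_rnDeriv_trim {μ ν : Measure Ω} [IsFiniteMeasure μ]
    [IsFiniteMeasure ν] (ρ : ∀ n, Measure[𝓕 n] Ω) {f g : ℕ → Ω → ℝ≥0∞}
    (hf : ∀ n, Measurable[𝓕 n] (f n)) (hg : ∀ n, Measurable[𝓕 n] (g n))
    (hμ : ∀ n, μ.trim (𝓕.le n) = (ρ n).withDensity (f n))
    (hν : ∀ n, ν.trim (𝓕.le n) = (ρ n).withDensity (g n)) :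
    ∀ᵐ x ∂ν, Tendsto (fun n => f n x / g n x) atTop
      (𝓝 ((μ.trim (iSup_le 𝓕.le)).rnDeriv (ν.trim (iSup_le 𝓕.le)) x)) := by
  have hratio (n : ℕ) :
      ∀ᵐ x ∂ν, (μ.trim (𝓕.le n)).rnDeriv (ν.trim (𝓕.le n)) x = f n x / g n x := by
    have : IsFiniteMeasure ((ρ n).withDensity (g n)) := hν n ▸ isFiniteMeasure_trim (𝓕.le n)
    refine ae_of_ae_trim (𝓕.le n) ?_
    rw [hμ n, hν n]
    exact rnDeriv_withDensity_withDensity (ρ n) (hf n) (hg n)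
  filter_upwards [ae_all_iff.2 hratio, ae_tendsto_rnDeriv_trim 𝓕 μ ν] with x hn hlim
  simpa only [hn] using hlim

end Filtration

theorem density_ratio_tendsto_zero_of_mutuallySingular_general
    {Ξ : Type*} {m : MeasurableSpace Ξ} (𝓕 : Filtration ℕ m) (Φ : ∀ n, Measure[𝓕 n] Ξ)
    (Q Q' : Measure Ξ) [IsFiniteMeasure Q] [IsFiniteMeasure Q']
    (hsing : Q.trim (iSup_le 𝓕.le) ⟂ₘ Q'.trim (iSup_le 𝓕.le))
    (q q' : ℕ → Ξ → ℝ≥0∞)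
    (hq : ∀ n, Measurable[𝓕 n] (q n)) (hq' : ∀ n, Measurable[𝓕 n] (q' n))
    (hd : ∀ n, Q.trim (𝓕.le n) = (Φ n).withDensity (q n))
    (hd' : ∀ n, Q'.trim (𝓕.le n) = (Φ n).withDensity (q' n)) :
    ∀ᵐ ξ ∂Q', Tendsto (fun n => q n ξ / q' n ξ) atTop (nhds 0) := by
  have hzero := ae_of_ae_trim (iSup_le 𝓕.le) hsing.rnDeriv_ae_eq_zero
  filter_upwards [ae_tendsto_density_div_density_rnDeriv_trim 𝓕 Φ hq hq' hd hd', hzero]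
    with ξ hlim h0
  simpa only [h0, Pi.zero_apply] using hlim

/-- If `Q` and `Q'` are mutually singular on `𝒳_∞ = σ(⋃_n 𝒳_n)` and both are locally
absolutely continuous with respect to `Φ` along the filtration `(𝒳_n)`, with densities
`q_n` and `q'_n` respectively, then `q_n/q'_n → 0` as `n → ∞`, `Q'`-almost surely. -/
theorem density_ratio_tendsto_zero_of_mutuallySingular
    {Ξ : Type*} [m : MeasurableSpace Ξ] (𝓕 : Filtration ℕ m)
    (Φ Q Q' : Measure Ξ) [IsProbabilityMeasure Φ] [IsProbabilityMeasure Q]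
    [IsProbabilityMeasure Q']
    (hsing : ∃ s : Set Ξ, MeasurableSet[⨆ n, 𝓕 n] s ∧ Q s = 0 ∧ Q' sᶜ = 0)
    (q q' : ℕ → Ξ → ℝ≥0∞)
    (hq : ∀ n, Measurable[𝓕 n] (q n)) (hq' : ∀ n, Measurable[𝓕 n] (q' n))
    (hd : ∀ n, Q.trim (𝓕.le n) = (Φ.trim (𝓕.le n)).withDensity (q n))
    (hd' : ∀ n, Q'.trim (𝓕.le n) = (Φ.trim (𝓕.le n)).withDensity (q' n)) :
    ∀ᵐ ξ ∂Q', Tendsto (fun n => q n ξ / q' n ξ) atTop (nhds 0) := by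
  obtain ⟨s, hs, hQ, hQ'⟩ := hsing
  exact density_ratio_tendsto_zero_of_mutuallySingular_general 𝓕 (fun n => Φ.trim (𝓕.le n)) Q Q'
    ⟨s, hs, by rwa [trim_measurableSet_eq _ hs], by rwa [trim_measurableSet_eq _ hs.compl]⟩
    q q' hq hq' hd hd'
end

section
/- Let S be a Polish space and let 𝕄 be a Borel probability measure on P(S). Then for every bounded continuous convex function f : P(S) → ℝ one has f(b(𝕄)) ≤ ∫ f(ν) 𝕄(dν), where b(𝕄) is the barycenter of 𝕄 (Jensen's inequality for barycenters). -/
/-!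
Let `ν₀, ν₁, …` be independent random measures with law `𝕄`. By the strong law of large numbers,
almost surely the means of `f(ν₀), …, f(νₙ)` converge to `∫ f d𝕄`, and the means of `ν₀, …, νₙ`
converge to `b` on each member of a countable π-system which is a basis of `S`, hence weakly.
Convexity bounds `f` at the mean of the measures by the mean of the values of `f`, and lower
semicontinuity of `f` at `b` passes this bound to the limit.
-/

open MeasureTheory Filter Topology ENNReal
open scoped NNReal

/-- The Borel σ-algebra on `P(S)` for the topology of weak convergence. -/
noncomputable instance probabilityMeasureMeasurableSpace
    {S : Type*} [MeasurableSpace S] [TopologicalSpace S] [OpensMeasurableSpace S] :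
    MeasurableSpace (ProbabilityMeasure S) := borel _

open TopologicalSpace ProbabilityTheory

section StrongLaw

variable {α E : Type*} [MeasurableSpace α] {M : Measure α}
  [NormedAddCommGroup E] [NormedSpace ℝ E] [CompleteSpace E] [MeasurableSpace E] [BorelSpace E]

theorem ae_tendsto_average_of_pairwise_indepFun {Ω : Type*} [MeasurableSpace Ω] {Q : Measure Ω}
    {X : ℕ → Ω → α} (hX : ∀ i, MeasurePreserving (X i) Q M)
    (hindep : Pairwise fun i j ↦ IndepFun (X i) (X j) Q) {g : α → E} (hg : Integrable g M) :
    ∀ᵐ ω ∂Q, Tendsto (fun n : ℕ ↦ (n : ℝ)⁻¹ • ∑ i ∈ Finset.range n, g (X i ω)) atTop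
      (𝓝 (∫ x, g x ∂M)) := by
  have hg_map (i : ℕ) : AEMeasurable g (Q.map (X i)) := by
    rw [(hX i).map_eq]
    exact hg.aemeasurable
  have hident (i : ℕ) : IdentDistrib (g ∘ X i) (g ∘ X 0) Q Q :=
    IdentDistrib.comp_of_aemeasurable
      ⟨(hX i).aemeasurable, (hX 0).aemeasurable, by rw [(hX i).map_eq, (hX 0).map_eq]⟩ (hg_map i)
  have hmean : ∫ ω, g (X 0 ω) ∂Q = ∫ x, g x ∂M := by
    rw [← integral_map (hX 0).aemeasurable ((hX 0).map_eq.symm ▸ hg.aestronglyMeasurable),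
      (hX 0).map_eq]
  rw [← hmean]
  exact strong_law_ae (fun i ↦ g ∘ X i) ((hX 0).integrable_comp_of_integrable hg)
    (fun i j hij ↦ (hindep hij).comp₀ (hX i).aemeasurable (hX j).aemeasurable (hg_map i) (hg_map j))
    hident

theorem ae_tendsto_average_infinitePi [IsProbabilityMeasure M] {g : α → E} (hg : Integrable g M) :
    ∀ᵐ ω ∂Measure.infinitePi (fun _ : ℕ ↦ M),
      Tendsto (fun n : ℕ ↦ (n : ℝ)⁻¹ • ∑ i ∈ Finset.range n, g (ω i)) atTop
        (𝓝 (∫ x, g x ∂M)) :=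
  ae_tendsto_average_of_pairwise_indepFun (fun i ↦ measurePreserving_eval_infinitePi (fun _ ↦ M) i)
    (fun _ _ hij ↦ (iIndepFun_infinitePi (X := fun _ ↦ id) fun _ ↦ measurable_id).indepFun hij) hg

end StrongLaw

section WeakConvergence

theorem exists_countable_isPiSystem_isTopologicalBasis (S : Type*) [TopologicalSpace S]
    [SecondCountableTopology S] :
    ∃ P : Set (Set S), P.Countable ∧ IsPiSystem P ∧ IsTopologicalBasis P := by
  refine ⟨Set.sInter '' {T | T.Finite ∧ T ⊆ countableBasis S},
    (Set.countable_ofPred_finite_subset (countable_countableBasis S)).image _, ?_,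
    isTopologicalBasis_of_subbasis (eq_generateFrom_countableBasis S)⟩
  rintro _ ⟨T, hT, rfl⟩ _ ⟨U, hU, rfl⟩ _
  exact ⟨T ∪ U, ⟨hT.1.union hU.1, Set.union_subset hT.2 hU.2⟩, Set.sInter_union T U⟩

variable {S : Type*} [TopologicalSpace S] [MeasurableSpace S]

theorem tendsto_probabilityMeasure_of_isTopologicalBasis [SecondCountableTopology S]
    [OpensMeasurableSpace S] {P : Set (Set S)} (hpi : IsPiSystem P) (hP : IsTopologicalBasis P)
    {ι : Type*} {l : Filter ι} [l.IsCountablyGenerated] {ρ : ι → ProbabilityMeasure S}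
    {b : ProbabilityMeasure S}
    (h : ∀ A ∈ P, Tendsto (fun i ↦ (ρ i : Measure S).real A) l (𝓝 ((b : Measure S).real A))) :
    Tendsto ρ l (𝓝 b) := by
  refine hpi.tendsto_probabilityMeasure_of_tendsto_of_mem
    (fun A hA ↦ (hP.isOpen hA).measurableSet) (fun u hu x hx ↦ ?_)
    fun A hA ↦ NNReal.tendsto_coe.1 (h A hA)
  obtain ⟨A, hA, hxA, hAu⟩ := hP.exists_subset_of_mem_open hx hu
  exact ⟨A, hA, hP.mem_nhds hA hxA, hAu⟩

theorem lowerSemicontinuous_measure_of_isOpen [OpensMeasurableSpace S] [HasOuterApproxClosed S]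
    {G : Set S} (hG : IsOpen G) :
    LowerSemicontinuous fun ν : ProbabilityMeasure S ↦ (ν : Measure S) G :=
  lowerSemicontinuous_iff_le_liminf.2 fun _ ↦
    ProbabilityMeasure.le_liminf_measure_open_of_tendsto tendsto_id hG

instance borelSpace_probabilityMeasure [OpensMeasurableSpace S] :
    BorelSpace (ProbabilityMeasure S) := ⟨rfl⟩

theorem measurable_probabilityMeasure_toMeasure [BorelSpace S] [HasOuterApproxClosed S] :
    Measurable fun ν : ProbabilityMeasure S ↦ (ν : Measure S) :=
  Measurable.measure_of_isPiSystem_of_isProbabilityMeasure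
    (BorelSpace.measurable_eq (α := S)) isPiSystem_isOpen
    fun _ hG ↦ (lowerSemicontinuous_measure_of_isOpen hG).measurable

theorem measurable_probabilityMeasure_apply [BorelSpace S] [HasOuterApproxClosed S] {A : Set S}
    (hA : MeasurableSet A) : Measurable fun ν : ProbabilityMeasure S ↦ (ν : Measure S) A :=
  (Measure.measurable_coe hA).comp measurable_probabilityMeasure_toMeasure

end WeakConvergence

/-- `b` is the barycenter of the law `𝕄` of a random probability measure: the value of `b` on each
measurable set is the mean of the values of the random measure. -/
def IsBarycenter {S : Type*} [TopologicalSpace S] [MeasurableSpace S] [OpensMeasurableSpace S]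
    (𝕄 : Measure (ProbabilityMeasure S)) (b : ProbabilityMeasure S) : Prop :=
  ∀ A : Set S, MeasurableSet A → (b : Measure S) A = ∫⁻ ν, (ν : Measure S) A ∂𝕄

namespace IsBarycenter

variable {S : Type*} [TopologicalSpace S] [HasOuterApproxClosed S] [MeasurableSpace S]
  [BorelSpace S] {𝕄 : Measure (ProbabilityMeasure S)} {b : ProbabilityMeasure S} {A : Set S}

theorem integral_measureReal (hb : IsBarycenter 𝕄 b) (hA : MeasurableSet A) :
    ∫ ν, (ν : Measure S).real A ∂𝕄 = (b : Measure S).real A := by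
  simp only [measureReal_def]
  rw [integral_toReal (measurable_probabilityMeasure_apply hA).aemeasurable
    (Eventually.of_forall fun _ ↦ measure_lt_top _ _), hb A hA]

theorem ae_tendsto_average_measureReal [IsProbabilityMeasure 𝕄] (hb : IsBarycenter 𝕄 b)
    (hA : MeasurableSet A) :
    ∀ᵐ ω ∂Measure.infinitePi (fun _ : ℕ ↦ 𝕄),
      Tendsto (fun n : ℕ ↦ (n : ℝ)⁻¹ • ∑ i ∈ Finset.range n, (ω i : Measure S).real A) atTop
        (𝓝 ((b : Measure S).real A)) := by
  have hmeas : Measurable fun ν : ProbabilityMeasure S ↦ (ν : Measure S).real A :=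
    (measurable_probabilityMeasure_apply hA).ennreal_toReal
  have hint : Integrable (fun ν : ProbabilityMeasure S ↦ (ν : Measure S).real A) 𝕄 :=
    .of_bound hmeas.aestronglyMeasurable 1 <| Eventually.of_forall fun ν ↦ by
      simpa only [Real.norm_of_nonneg measureReal_nonneg] using measureReal_le_one
  rw [← hb.integral_measureReal hA]
  exact ae_tendsto_average_infinitePi hint

end IsBarycenter

/-- Convexity of a real function on the probability measures on `S`. A convex combination of
probability measures is encoded by a third probability measure which equals it in `Measure S`. -/
def IsConvexFunctional {S : Type*} [MeasurableSpace S] (f : ProbabilityMeasure S → ℝ) : Prop :=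
  ∀ (μ ν ρ : ProbabilityMeasure S) (t : ℝ≥0), t ≤ 1 →
    (ρ : Measure S) = (t : ℝ≥0∞) • (μ : Measure S) + (1 - (t : ℝ≥0∞)) • (ν : Measure S) →
    f ρ ≤ (t : ℝ) * f μ + (1 - (t : ℝ)) * f ν

/-- The epigraph of a real function on the probability measures on `S`, placed in a real vector
space so that convexity theory applies to it. -/
def signedEpigraph {S : Type*} [MeasurableSpace S] (f : ProbabilityMeasure S → ℝ) :
    Set (SignedMeasure S × ℝ) :=
  {p | ∃ μ : ProbabilityMeasure S, (μ : Measure S).toSignedMeasure = p.1 ∧ f μ ≤ p.2}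

namespace IsConvexFunctional

variable {S : Type*} [MeasurableSpace S] {f : ProbabilityMeasure S → ℝ}

theorem convex_signedEpigraph (hf : IsConvexFunctional f) : Convex ℝ (signedEpigraph f) := by
  rintro ⟨_, r⟩ ⟨μ, rfl, hμ⟩ ⟨_, s⟩ ⟨ν, rfl, hν⟩ t u ht hu htu
  lift t to ℝ≥0 using ht
  lift u to ℝ≥0 using hu
  have htu' : t + u = 1 := by exact_mod_cast htu
  have hprob : IsProbabilityMeasure (t • (μ : Measure S) + u • (ν : Measure S)) :=
    ⟨by simpa using mod_cast htu'⟩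
  have hu_eq : (u : ℝ≥0∞) = 1 - (t : ℝ≥0∞) :=
    ENNReal.eq_sub_of_add_eq' ENNReal.one_ne_top (by rw [add_comm]; exact_mod_cast htu')
  refine ⟨⟨_, hprob⟩, ?_, ?_⟩
  · simp [NNReal.smul_def]
  · calc f ⟨_, hprob⟩ ≤ t * f μ + (1 - t) * f ν :=
          hf μ ν _ t (htu' ▸ le_self_add) (by rw [← hu_eq]; rfl)
      _ = t * f μ + u * f ν := by rw [← htu, add_sub_cancel_left]
      _ ≤ t * r + u * s := by gcongr

theorem exists_average_le (hf : IsConvexFunctional f) {ι : Type*} {s : Finset ι}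
    (hs : s.Nonempty) (ν : ι → ProbabilityMeasure S) :
    ∃ ρ : ProbabilityMeasure S,
      (∀ A, MeasurableSet A →
        (ρ : Measure S).real A = (s.card : ℝ)⁻¹ • ∑ i ∈ s, (ν i : Measure S).real A) ∧
      f ρ ≤ (s.card : ℝ)⁻¹ • ∑ i ∈ s, f (ν i) := by
  have hweights : ∑ _i ∈ s, (s.card : ℝ)⁻¹ = 1 := by
    simp [hs.card_ne_zero]
  obtain ⟨ρ, hρ, hfρ⟩ := hf.convex_signedEpigraph.sum_mem
    (z := fun i ↦ ((ν i : Measure S).toSignedMeasure, f (ν i)))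
    (fun _ _ ↦ by positivity) hweights fun i _ ↦ ⟨ν i, rfl, le_rfl⟩
  refine ⟨ρ, fun A hA ↦ ?_, ?_⟩
  · have hρA := congrArg (fun κ : SignedMeasure S ↦ κ A) hρ
    simpa [Prod.fst_sum, hA, Finset.mul_sum] using hρA
  · simpa only [Prod.snd_sum, Prod.smul_snd, ← Finset.smul_sum] using hfρ

end IsConvexFunctional

theorem jensen_inequality_for_barycenter_general
    {S : Type*} [TopologicalSpace S] [SecondCountableTopology S] [HasOuterApproxClosed S]
    [MeasurableSpace S] [BorelSpace S]
    {𝕄 : Measure (ProbabilityMeasure S)} [IsProbabilityMeasure 𝕄]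
    {f : ProbabilityMeasure S → ℝ} (hf : IsConvexFunctional f) (hfi : Integrable f 𝕄)
    {b : ProbabilityMeasure S} (hb : IsBarycenter 𝕄 b) (hfb : LowerSemicontinuousAt f b) :
    f b ≤ ∫ ν, f ν ∂𝕄 := by
  obtain ⟨P, hPcount, hPpi, hPbasis⟩ := exists_countable_isPiSystem_isTopologicalBasis S
  have hmeasures := (ae_ball_iff hPcount).2 fun A hA ↦
    hb.ae_tendsto_average_measureReal (hPbasis.isOpen hA).measurableSet
  obtain ⟨ω, hωf, hωP⟩ := ((ae_tendsto_average_infinitePi hfi).and hmeasures).exists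
  choose ρ hρ hfρ using fun n ↦ hf.exists_average_le (Finset.nonempty_range_add_one (n := n)) ω
  simp only [Finset.card_range] at hρ hfρ
  have hρb : Tendsto ρ atTop (𝓝 b) :=
    tendsto_probabilityMeasure_of_isTopologicalBasis hPpi hPbasis fun A hA ↦
      ((tendsto_add_atTop_iff_nat 1).2 (hωP A hA)).congr fun n ↦
        (hρ n A (hPbasis.isOpen hA).measurableSet).symm
  refine le_of_forall_lt_imp_le_of_dense fun c hc ↦
    ge_of_tendsto ((tendsto_add_atTop_iff_nat 1).2 hωf) ?_
  filter_upwards [hρb.eventually (hfb c hc)] with n hn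
  exact hn.le.trans (hfρ n)

/-- Jensen's inequality for barycenters: if `S` is Polish, `𝕄` is a Borel probability
measure on `P(S)`, `f : P(S) → ℝ` is bounded, continuous and convex, and `b` is the
barycenter of `𝕄` (i.e. `b(A) = ∫ ν(A) 𝕄(dν)` for all Borel `A`), then
`f(b) ≤ ∫ f(ν) 𝕄(dν)`. -/
theorem jensen_inequality_for_barycenter
    {S : Type*} [TopologicalSpace S] [PolishSpace S] [MeasurableSpace S] [BorelSpace S]
    (𝕄 : ProbabilityMeasure (ProbabilityMeasure S))
    (f : ProbabilityMeasure S → ℝ)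
    (hfc : Continuous f) (hfb : ∃ C : ℝ, ∀ μ, |f μ| ≤ C)
    (hfconv : ∀ (μ ν ρ : ProbabilityMeasure S) (t : ℝ≥0), t ≤ 1 →
      (ρ : Measure S) = (t : ℝ≥0∞) • (μ : Measure S) + (1 - (t : ℝ≥0∞)) • (ν : Measure S) →
      f ρ ≤ (t : ℝ) * f μ + (1 - (t : ℝ)) * f ν)
    (b : ProbabilityMeasure S)
    (hb : ∀ A : Set S, MeasurableSet A →
      (b : Measure S) A = ∫⁻ ν, (ν : Measure S) A
        ∂(𝕄 : Measure (ProbabilityMeasure S))) :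
    f b ≤ ∫ ν, f ν ∂(𝕄 : Measure (ProbabilityMeasure S)) := by
  obtain ⟨C, hC⟩ := hfb
  exact jensen_inequality_for_barycenter_general hfconv
    (.of_bound hfc.measurable.aestronglyMeasurable C (Eventually.of_forall hC)) hb
    hfc.continuousAt.lowerSemicontinuousAt
end

section
/- Let S be a Polish space and let 𝕄, 𝕄′ be Borel probability measures on P(S). If ∫ f(ν) 𝕄(dν) = ∫ f(ν) 𝕄′(dν) for every bounded continuous convex function f : P(S) → ℝ, then 𝕄 = 𝕄′. In particular, the relation 𝕄 ≺ 𝕄′ (meaning ∫ f d𝕄 ≤ ∫ f d𝕄′ for all bounded continuous convex f) is antisymmetric: 𝕄 ≺ 𝕄′ and 𝕄′ ≺ 𝕄 imply 𝕄 = 𝕄′. -/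
open MeasureTheory Filter Topology ENNReal
open scoped NNReal

/-!
The exponentials `ν ↦ exp (∫ g dν)`, for `g` bounded and continuous, are bounded, continuous and
convex on `P(S)`, and they are closed under multiplication. For `S` compact metrizable, `P(S)` is
compact metrizable too, so by Stone–Weierstrass the algebra spanned by the exponentials determines
finite measures on `P(S)`. A separable pseudometrizable `S` has the topology induced by a map into
the Hilbert cube `Q`; push-forward along it induces the topology of `P(S)` from that of `P(Q)` and
pulls exponentials on `P(Q)` back to exponentials on `P(S)`, which reduces to the compact case.
-/

open BoundedContinuousFunction TopologicalSpace

instance probabilityMeasureBorelSpace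
    {S : Type*} [MeasurableSpace S] [TopologicalSpace S] [OpensMeasurableSpace S] :
    BorelSpace (ProbabilityMeasure S) := ⟨rfl⟩

section Inducing

variable {X Y : Type*} [TopologicalSpace X] [TopologicalSpace Y]
  [MeasurableSpace X] [MeasurableSpace Y]

lemma measure_eq_of_map_eq_of_isInducing [BorelSpace X] [BorelSpace Y] {f : X → Y}
    (hf : IsInducing f) {μ ν : Measure X} (h : μ.map f = ν.map f) : μ = ν := by
  have hfm : Measurable f := hf.continuous.measurable
  ext s hs
  obtain ⟨t, ht, rfl⟩ : ∃ t, MeasurableSet t ∧ f ⁻¹' t = s := by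
    rwa [BorelSpace.measurable_eq (α := X), hf.eq_induced, borel_comap,
      ← BorelSpace.measurable_eq (α := Y)] at hs
  rw [← Measure.map_apply hfm ht, h, Measure.map_apply hfm ht]

lemma isInducing_probabilityMeasure_map [OpensMeasurableSpace X] [BorelSpace Y]
    [HasOuterApproxClosed Y] [FirstCountableTopology (ProbabilityMeasure Y)] {f : X → Y}
    (hf : IsInducing f) :
    IsInducing fun ν : ProbabilityMeasure X ↦ ν.map hf.continuous.measurable.aemeasurable := by
  refine isInducing_iff_nhds.2 fun μ ↦ le_antisymm
    (ProbabilityMeasure.continuous_map hf.continuous).continuousAt.tendsto.le_comap ?_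
  -- By the portmanteau theorem it suffices to bound the mass of open sets of `X`, and these are
  -- preimages of open sets of `Y`.
  refine tendsto_id'.1 (tendsto_of_forall_isOpen_le_liminf' fun U hU ↦ ?_)
  obtain ⟨V, hV, rfl⟩ := hf.isOpen_iff.1 hU
  simp only [id, ← ProbabilityMeasure.map_apply' _ hf.continuous.measurable.aemeasurable
    hV.measurableSet]
  exact ProbabilityMeasure.le_liminf_measure_open_of_tendsto tendsto_comap hV

end Inducing

lemma exists_isInducing_to_hilbert_cube (X : Type*) [TopologicalSpace X] [PseudoMetrizableSpace X]
    [SeparableSpace X] : ∃ f : X → ℕ → unitInterval, IsInducing f := by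
  let := pseudoMetrizableSpacePseudoMetric X
  have : SeparableSpace (SeparationQuotient X) :=
    SeparationQuotient.surjective_mk.denseRange.separableSpace SeparationQuotient.continuous_mk
  obtain ⟨e, he⟩ :=
    Metric.PiNatEmbed.exists_embedding_to_hilbert_cube (X := SeparationQuotient X)
  exact ⟨_, he.isInducing.comp SeparationQuotient.isInducing_mk⟩

lemma measure_eq_of_forall_mem_submonoid_integral_eq {𝕜 E : Type*} [RCLike 𝕜]
    [TopologicalSpace E] [PolishSpace E] [MeasurableSpace E] [BorelSpace E] {P P' : Measure E}
    [IsFiniteMeasure P] [IsFiniteMeasure P'] {M : Submonoid (E →ᵇ 𝕜)}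
    (hstar : ∀ f ∈ M, star f ∈ M) (hsep : ∀ x y, x ≠ y → ∃ f ∈ M, f x ≠ f y)
    (h : ∀ f ∈ M, ∫ x, f x ∂P = ∫ x, f x ∂P') : P = P' := by
  refine ext_of_forall_mem_subalgebra_integral_eq_of_polish
    (A := StarAlgebra.adjoin 𝕜 (M : Set (E →ᵇ 𝕜))) (fun x y hxy ↦ ?_) fun f hf ↦ ?_
  · obtain ⟨f, hfM, hf⟩ := hsep x y hxy
    exact ⟨f, ⟨f.toContinuousMap, ⟨f, StarAlgebra.subset_adjoin 𝕜 _ hfM, rfl⟩, rfl⟩, hf⟩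
  have hM : (M : Set (E →ᵇ 𝕜)) ∪ star (M : Set (E →ᵇ 𝕜)) = M :=
    Set.union_eq_left.2 fun g hg ↦ by simpa using hstar _ hg
  have hspan : f ∈ Submodule.span 𝕜 (M : Set (E →ᵇ 𝕜)) := by
    rwa [← M.closure_eq, ← hM, ← StarAlgebra.adjoin_eq_span]
  clear hf
  induction hspan using Submodule.span_induction with
  | mem f hfM => exact h f hfM
  | zero => simp
  | add f g _ _ hf hg =>
    simp only [BoundedContinuousFunction.add_apply]
    rw [integral_add (f.integrable _) (g.integrable _),
      integral_add (f.integrable _) (g.integrable _), hf, hg]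
  | smul c f _ hf =>
    simp only [BoundedContinuousFunction.coe_smul, integral_smul, hf]

lemma integral_convexCombination_measure {X E : Type*} [MeasurableSpace X] [NormedAddCommGroup E]
    [NormedSpace ℝ E] {μ ν : Measure X} {f : X → E} (hμ : Integrable f μ) (hν : Integrable f ν)
    {t : ℝ≥0} (ht : t ≤ 1) :
    ∫ x, f x ∂((t : ℝ≥0∞) • μ + (1 - (t : ℝ≥0∞)) • ν) =
      (t : ℝ) • ∫ x, f x ∂μ + (1 - (t : ℝ)) • ∫ x, f x ∂ν := by
  have ht' : (1 - (t : ℝ≥0∞)).toReal = 1 - (t : ℝ) := by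
    rw [ENNReal.toReal_sub_of_le (mod_cast ht) one_ne_top, toReal_one, coe_toReal]
  rw [integral_add_measure (hμ.smul_measure coe_ne_top) (hν.smul_measure (by simp)),
    integral_smul_measure, integral_smul_measure, ht', coe_toReal]

section ExpIntegral

variable {S : Type*} [TopologicalSpace S] [MeasurableSpace S]

/-- The exponential `ν ↦ exp (∫ g dν)` of the linear functional on `P(S)` given by a bounded
continuous function `g`. These are the convex test functions which already determine the finite
measures on `P(S)`. -/
noncomputable def expIntegral [OpensMeasurableSpace S] (g : S →ᵇ ℝ) : ProbabilityMeasure S →ᵇ ℝ :=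
  .ofNormedAddCommGroup (fun ν ↦ Real.exp (∫ x, g x ∂(ν : Measure S)))
    (Real.continuous_exp.comp
      (ProbabilityMeasure.continuous_integral_boundedContinuousFunction g))
    (Real.exp ‖g‖) fun ν ↦ by
      rw [Real.norm_eq_abs, Real.abs_exp, Real.exp_le_exp]
      exact (le_abs_self _).trans (g.norm_integral_le_norm _)

lemma expIntegral_apply [OpensMeasurableSpace S] (g : S →ᵇ ℝ) (ν : ProbabilityMeasure S) :
    expIntegral g ν = Real.exp (∫ x, g x ∂(ν : Measure S)) := rfl

/-- `expIntegral` as a monoid homomorphism; its range is the multiplicative family to which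
`measure_eq_of_forall_mem_submonoid_integral_eq` is applied. -/
noncomputable def expIntegralHom (S : Type*) [TopologicalSpace S] [MeasurableSpace S]
    [OpensMeasurableSpace S] : Multiplicative (S →ᵇ ℝ) →* (ProbabilityMeasure S →ᵇ ℝ) where
  toFun g := expIntegral g.toAdd
  map_one' := by ext ν; simp [expIntegral_apply]
  map_mul' g k := by
    ext ν
    simp only [expIntegral_apply, toAdd_mul, BoundedContinuousFunction.mul_apply,
      BoundedContinuousFunction.add_apply]
    rw [integral_add (g.toAdd.integrable _) (k.toAdd.integrable _), Real.exp_add]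

lemma expIntegral_map {X Y : Type*} [TopologicalSpace X] [MeasurableSpace X]
    [OpensMeasurableSpace X] [TopologicalSpace Y] [MeasurableSpace Y] [BorelSpace Y] (f : C(X, Y))
    (g : Y →ᵇ ℝ) (ν : ProbabilityMeasure X) :
    expIntegral g (ν.map f.continuous.measurable.aemeasurable) =
      expIntegral (g.compContinuous f) ν := by
  rw [expIntegral_apply, ProbabilityMeasure.toMeasure_map,
    integral_map f.continuous.measurable.aemeasurable g.continuous.aestronglyMeasurable]
  rfl

lemma expIntegral_convexCombination_le [OpensMeasurableSpace S] (g : S →ᵇ ℝ)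
    {μ ν ρ : ProbabilityMeasure S} {t : ℝ≥0} (ht : t ≤ 1)
    (hρ : (ρ : Measure S) = (t : ℝ≥0∞) • (μ : Measure S) + (1 - (t : ℝ≥0∞)) • (ν : Measure S)) :
    expIntegral g ρ ≤ (t : ℝ) * expIntegral g μ + (1 - (t : ℝ)) * expIntegral g ν := by
  simp only [expIntegral_apply]
  rw [hρ, integral_convexCombination_measure (g.integrable _) (g.integrable _) ht]
  exact convexOn_exp.2 (Set.mem_univ _) (Set.mem_univ _) t.2
    (sub_nonneg.2 (mod_cast ht)) (add_sub_cancel _ _)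

lemma exists_expIntegral_ne [BorelSpace S] [HasOuterApproxClosed S] {μ ν : ProbabilityMeasure S}
    (hne : μ ≠ ν) : ∃ g : S →ᵇ ℝ, expIntegral g μ ≠ expIntegral g ν := by
  contrapose! hne
  refine Subtype.ext (ext_of_forall_integral_eq_of_IsFiniteMeasure
    (μ := (μ : Measure S)) (ν := (ν : Measure S)) fun g ↦ Real.exp_injective (hne g))

lemma measure_eq_of_integral_expIntegral_eq_of_compactSpace [BorelSpace S] [CompactSpace S]
    [MetrizableSpace S] {P P' : Measure (ProbabilityMeasure S)} [IsFiniteMeasure P]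
    [IsFiniteMeasure P']
    (h : ∀ g : S →ᵇ ℝ, ∫ ν, expIntegral g ν ∂P = ∫ ν, expIntegral g ν ∂P') : P = P' := by
  have : PolishSpace (ProbabilityMeasure S) := by
    let := metrizableSpaceMetric S
    let := metrizableSpaceMetric (ProbabilityMeasure S)
    infer_instance
  refine measure_eq_of_forall_mem_submonoid_integral_eq (M := MonoidHom.mrange (expIntegralHom S))
    (fun f hf ↦ ?_) (fun μ ν hne ↦ ?_) ?_
  · rwa [show star f = f by ext; simp]
  · obtain ⟨g, hg⟩ := exists_expIntegral_ne hne
    exact ⟨_, ⟨.ofAdd g, rfl⟩, hg⟩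
  · rintro _ ⟨g, rfl⟩
    exact h g.toAdd

lemma measure_eq_of_integral_expIntegral_eq [BorelSpace S] [PseudoMetrizableSpace S]
    [SeparableSpace S] {P P' : Measure (ProbabilityMeasure S)} [IsFiniteMeasure P]
    [IsFiniteMeasure P']
    (h : ∀ g : S →ᵇ ℝ, ∫ ν, expIntegral g ν ∂P = ∫ ν, expIntegral g ν ∂P') : P = P' := by
  obtain ⟨e, he⟩ := exists_isInducing_to_hilbert_cube S
  have hmap := isInducing_probabilityMeasure_map he
  refine measure_eq_of_map_eq_of_isInducing hmap
    (measure_eq_of_integral_expIntegral_eq_of_compactSpace fun g ↦ ?_)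
  have hmeas {P : Measure (ProbabilityMeasure S)} := hmap.continuous.aemeasurable (μ := P)
  rw [integral_map hmeas (expIntegral g).continuous.aestronglyMeasurable,
    integral_map hmeas (expIntegral g).continuous.aestronglyMeasurable]
  simpa only [expIntegral_map ⟨e, he.continuous⟩] using h (g.compContinuous ⟨e, he.continuous⟩)

end ExpIntegral

theorem eq_of_integral_convex_eq_general
    {S : Type*} [TopologicalSpace S] [PseudoMetrizableSpace S] [SeparableSpace S]
    [MeasurableSpace S] [BorelSpace S]
    (𝕄 𝕄' : Measure (ProbabilityMeasure S)) [IsFiniteMeasure 𝕄] [IsFiniteMeasure 𝕄']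
    (h : ∀ f : ProbabilityMeasure S → ℝ, Continuous f → (∃ C : ℝ, ∀ μ, |f μ| ≤ C) →
      (∀ (μ ν ρ : ProbabilityMeasure S) (t : ℝ≥0), t ≤ 1 →
        (ρ : Measure S) = (t : ℝ≥0∞) • (μ : Measure S) + (1 - (t : ℝ≥0∞)) • (ν : Measure S) →
        f ρ ≤ (t : ℝ) * f μ + (1 - (t : ℝ)) * f ν) →
      ∫ ν, f ν ∂𝕄 = ∫ ν, f ν ∂𝕄') :
    𝕄 = 𝕄' :=
  measure_eq_of_integral_expIntegral_eq fun g ↦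
    h (expIntegral g) (expIntegral g).continuous ⟨‖expIntegral g‖, (expIntegral g).norm_coe_le_norm⟩
      fun _ _ _ _ ht hρ ↦ expIntegral_convexCombination_le g ht hρ

/-- Bounded continuous convex functions are measure-determining on `P(S)` for Polish
`S`: if `∫ f d𝕄 = ∫ f d𝕄'` for every bounded continuous convex `f : P(S) → ℝ`, then
`𝕄 = 𝕄'`. In particular, the convex ordering `≺` is antisymmetric. -/
theorem eq_of_integral_convex_eq
    {S : Type*} [TopologicalSpace S] [PolishSpace S] [MeasurableSpace S] [BorelSpace S]
    (𝕄 𝕄' : ProbabilityMeasure (ProbabilityMeasure S))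
    (h : ∀ f : ProbabilityMeasure S → ℝ, Continuous f → (∃ C : ℝ, ∀ μ, |f μ| ≤ C) →
      (∀ (μ ν ρ : ProbabilityMeasure S) (t : ℝ≥0), t ≤ 1 →
        (ρ : Measure S) = (t : ℝ≥0∞) • (μ : Measure S) + (1 - (t : ℝ≥0∞)) • (ν : Measure S) →
        f ρ ≤ (t : ℝ) * f μ + (1 - (t : ℝ)) * f ν) →
      ∫ ν, f ν ∂(𝕄 : Measure (ProbabilityMeasure S)) =
        ∫ ν, f ν ∂(𝕄' : Measure (ProbabilityMeasure S))) :
    𝕄 = 𝕄' :=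
  Subtype.ext (eq_of_integral_convex_eq_general (𝕄 : Measure (ProbabilityMeasure S)) 𝕄' h)
end

section
/- Let 𝕄 be a Π-invariant probability measure on P(E). Then: (i) the barycenter of 𝕄 equals λ, i.e. ∫ ν({i}) 𝕄(dν) = λ_i for every i ∈ E; and (ii) for every bounded continuous convex function f : P(E) → ℝ and every n ≥ 0, Π^n f(λ) ≤ ∫ f(ν) 𝕄(dν) ≤ Σ_{x∈E} λ_x · Π^n f(δ_x), where Π^n f is the n-fold iterate of Π applied to f and δ_x is the point mass at x. -/
open MeasureTheory Filter Topology ENNReal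

/-- Convex combination `t•p + (1-t)•q` of two probability vectors. -/
noncomputable def pvCombo {E : Type*} (t : ℝ) (ht0 : 0 ≤ t) (ht1 : t ≤ 1)
    (p q : ProbVec E) : ProbVec E :=
  ⟨fun i => t * (p : E → ℝ) i + (1 - t) * (q : E → ℝ) i,
    fun i => add_nonneg (mul_nonneg ht0 (p.2.1 i)) (mul_nonneg (by linarith) (q.2.1 i)),
    by
      have h1 : HasSum (fun i => t * (p : E → ℝ) i) (t * 1) := p.2.2.mul_left t
      have h2 : HasSum (fun i => (1 - t) * (q : E → ℝ) i) ((1 - t) * 1) :=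
        q.2.2.mul_left (1 - t)
      have h3 := h1.add h2
      have h4 : t * 1 + (1 - t) * 1 = 1 := by ring
      rw [h4] at h3
      exact h3⟩

/-- Convexity of a real function on `P(E)`. -/
def IsConvexFn {E : Type*} (f : ProbVec E → ℝ) : Prop :=
  ∀ (t : ℝ) (ht0 : 0 ≤ t) (ht1 : t ≤ 1) (p q : ProbVec E),
    f (pvCombo t ht0 ht1 p q) ≤ t * f p + (1 - t) * f q

/-- The point mass `δ_x ∈ P(E)`. -/
noncomputable def deltaPV {E : Type*} [DecidableEq E] (x : E) : ProbVec E :=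
  ⟨fun i => if i = x then 1 else 0,
    fun i => by by_cases h : i = x <;> simp [h],
    hasSum_ite_eq x 1⟩

/-!
The kernel `Π` maps bounded continuous convex functions to functions of the same kind, so iterating
the invariance of `𝕄` gives `∫ Πⁿf d𝕄 = ∫ f d𝕄`. Both inequalities are then Jensen's inequality for
the convex function `Πⁿf`: once for the law `𝕄` with its barycenter, and once for each `ν` seen as
the barycenter of `∑ₓ ν(x) δ_{δₓ}`, integrated over `𝕄`. Invariance tested on the coordinates
`ν ↦ ν(j)` says that the barycenter is an invariant law of `P`, hence equals `λ`.

Jensen's inequality is available because `P(E)` is a closed convex subset of `ℓ¹(E)` on which weak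
and norm convergence agree. Convexity is preserved because `Πf(μ)` integrates the perspective of
`f`, the map `v ↦ f(v / |v|) |v|`, along the linear maps `μ ↦ μM(y)`. Continuity comes from the
contraction estimate `∫ ‖(p - q)M(y)‖₁ φ(dy) ≤ ‖p - q‖₁`: along a subsequence `pₖM(y) → pM(y)` for
almost every `y`, and the dominating functions `pₖM(y)1` converge in `L¹(φ)`.
-/

/-! ### Limits of series and integrals -/

section Series

variable {ι κ : Type*}

lemma tendsto_tsum_abs_sub_of_hasSum {l : Filter κ} {a : κ → ι → ℝ} {b : ι → ℝ}
    {s : κ → ℝ} {t : ℝ} (ha : ∀ k i, 0 ≤ a k i) (hb : ∀ i, 0 ≤ b i)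
    (has : ∀ k, HasSum (a k) (s k)) (hbt : HasSum b t) (hst : Tendsto s l (𝓝 t))
    (hab : ∀ i, Tendsto (fun k => a k i) l (𝓝 (b i))) :
    Tendsto (fun k => ∑' i, |a k i - b i|) l (𝓝 0) := by
  have hdom : ∀ k i, ‖max (b i - a k i) 0‖ ≤ b i := fun k i => by
    rw [Real.norm_of_nonneg (le_max_right _ _)]
    exact max_le (by linarith [ha k i]) (hb i)
  have hpos : Tendsto (fun k => ∑' i, max (b i - a k i) 0) l (𝓝 0) := by
    simpa using tendsto_tsum_of_dominated_convergence hbt.summable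
      (fun i => ((tendsto_const_nhds (x := b i)).sub (hab i)).max tendsto_const_nhds)
      (Eventually.of_forall hdom)
  have habs : ∀ k i, |a k i - b i| = a k i - b i + 2 * max (b i - a k i) 0 := fun k i => by
    rcases le_total (b i) (a k i) with h | h
    · rw [abs_of_nonneg (by linarith), max_eq_right (by linarith)]; ring
    · rw [abs_of_nonpos (by linarith), max_eq_left (by linarith)]; ring
  have hsum : ∀ k, ∑' i, |a k i - b i| = s k - t + 2 * ∑' i, max (b i - a k i) 0 := fun k => by
    simp_rw [habs k]
    exact (((has k).sub hbt).add
      ((hbt.summable.of_norm_bounded (hdom k)).hasSum.mul_left 2)).tsum_eq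
  simpa [hsum] using (hst.sub_const t).add (hpos.const_mul 2)

lemma hasSum_mul_of_hasSum_one {P : ι → κ → ℝ} (hP0 : ∀ i j, 0 ≤ P i j)
    (hP1 : ∀ i, HasSum (P i) 1) {w : ι → ℝ} (hw : Summable w) :
    HasSum (fun x : ι × κ => w x.1 * P x.1 x.2) (∑' i, w i) := by
  have hrow : ∀ i, HasSum (fun j => ‖w i * P i j‖) ‖w i‖ := fun i => by
    simpa only [norm_mul, Real.norm_of_nonneg (hP0 i _), mul_one] using (hP1 i).mul_left ‖w i‖
  have hs : Summable fun x : ι × κ => w x.1 * P x.1 x.2 :=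
    Summable.of_norm <| (summable_prod_of_nonneg fun _ => norm_nonneg _).2
      ⟨fun i => (hrow i).summable, by simpa only [(hrow _).tsum_eq] using hw.norm⟩
  have hfib := hs.hasSum.prod_fiberwise fun i => by simpa using (hP1 i).mul_left (w i)
  rw [hfib.tsum_eq]
  exact hs.hasSum

end Series

section Integration

variable {α ι : Type*} [MeasurableSpace α] {μ : Measure α}

lemma tsum_lintegral_enorm_ne_top {g : ι → α → ℝ} (hg : ∀ i, Integrable (g i) μ)
    (hs : Summable fun i => ∫ y, ‖g i y‖ ∂μ) : ∑' i, ∫⁻ y, ‖g i y‖ₑ ∂μ ≠ ∞ := by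
  simp_rw [← ofReal_integral_norm_eq_lintegral_enorm (hg _)]
  exact hs.tsum_ofReal_ne_top

lemma ae_summable_of_summable_integral_norm [Countable ι] {g : ι → α → ℝ}
    (hg : ∀ i, Integrable (g i) μ) (hs : Summable fun i => ∫ y, ‖g i y‖ ∂μ) :
    ∀ᵐ y ∂μ, Summable fun i => g i y := by
  have hne := tsum_lintegral_enorm_ne_top hg hs
  simp_rw [← eLpNorm_one_eq_lintegral_enorm] at hne
  filter_upwards [summable_norm_of_tsum_eLpNorm_ne_top le_rfl (fun i => (hg i).1) hne] with y hy
  exact hy.of_norm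

lemma integrable_tsum_of_summable_integral_norm [Countable ι] {g : ι → α → ℝ}
    (hg : ∀ i, Integrable (g i) μ) (hs : Summable fun i => ∫ y, ‖g i y‖ ∂μ) :
    Integrable (fun y => ∑' i, g i y) μ := by
  refine ⟨(AEMeasurable.tsum fun i => (hg i).aemeasurable).aestronglyMeasurable, ?_⟩
  calc ∫⁻ y, ‖∑' i, g i y‖ₑ ∂μ
      ≤ ∫⁻ y, ∑' i, ‖g i y‖ₑ ∂μ := lintegral_mono fun y => enorm_tsum_le_tsum_enorm
    _ = ∑' i, ∫⁻ y, ‖g i y‖ₑ ∂μ := lintegral_tsum fun i => (hg i).1.enorm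
    _ < ∞ := (tsum_lintegral_enorm_ne_top hg hs).lt_top

lemma exists_strictMono_ae_tendsto_zero_of_tendsto_integral_norm {d : ℕ → α → ℝ}
    (hd : ∀ k, Integrable (d k) μ) (hd0 : Tendsto (fun k => ∫ y, ‖d k y‖ ∂μ) atTop (𝓝 0)) :
    ∃ ns : ℕ → ℕ, StrictMono ns ∧ ∀ᵐ y ∂μ, Tendsto (fun k => d (ns k) y) atTop (𝓝 0) := by
  refine (tendstoInMeasure_of_tendsto_eLpNorm one_ne_zero (fun k => (hd k).1)
    (aestronglyMeasurable_const (b := (0 : ℝ))) ?_).exists_seq_tendsto_ae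
  have hlim := ENNReal.tendsto_ofReal hd0
  simp_rw [ofReal_integral_norm_eq_lintegral_enorm (hd _), ENNReal.ofReal_zero] at hlim
  simpa [eLpNorm_one_eq_lintegral_enorm] using hlim

lemma abs_sub_clip_le {a b c : ℝ} (hab : |a| ≤ b) (hc : 0 ≤ c) :
    |a - max (min a c) (-c)| ≤ |b - c| := by
  obtain ⟨hba, hab⟩ := abs_le.1 hab
  rw [abs_le]
  constructor <;> grind

lemma tendsto_integral_of_le_of_tendsto_integral_abs_sub {h g : ℕ → α → ℝ} {h₀ g₀ : α → ℝ}
    (hmeas : ∀ k, AEStronglyMeasurable (h k) μ) (hg : ∀ k, Integrable (g k) μ)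
    (hg₀ : Integrable g₀ μ) (hgg₀ : Tendsto (fun k => ∫ y, |g k y - g₀ y| ∂μ) atTop (𝓝 0))
    (hle : ∀ k, ∀ᵐ y ∂μ, |h k y| ≤ g k y) (hle₀ : ∀ᵐ y ∂μ, |h₀ y| ≤ g₀ y)
    (hlim : ∀ᵐ y ∂μ, Tendsto (fun k => h k y) atTop (𝓝 (h₀ y))) :
    Tendsto (fun k => ∫ y, h k y ∂μ) atTop (𝓝 (∫ y, h₀ y ∂μ)) := by
  -- Clipping `h k` to `[-g₀, g₀]` costs at most `|g k - g₀|` and reduces the claim to dominated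
  -- convergence with the fixed majorant `g₀` (Pratt).
  let clip : ℕ → α → ℝ := fun k y => max (min (h k y) (g₀ y)) (-g₀ y)
  have hclip_meas : ∀ k, AEStronglyMeasurable (clip k) μ := fun k =>
    ((hmeas k).inf hg₀.1).sup hg₀.1.neg
  have hclip_le : ∀ k, ∀ᵐ y ∂μ, ‖clip k y‖ ≤ g₀ y := fun k => by
    filter_upwards [hle₀] with y hy
    have hpos : 0 ≤ g₀ y := (abs_nonneg _).trans hy
    exact abs_le.2 ⟨le_max_right _ _, max_le (min_le_right _ _) (by linarith)⟩
  have hclip : Tendsto (fun k => ∫ y, clip k y ∂μ) atTop (𝓝 (∫ y, h₀ y ∂μ)) := by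
    refine tendsto_integral_of_dominated_convergence g₀ hclip_meas hg₀ hclip_le ?_
    filter_upwards [hle₀, hlim] with y hy hylim
    have := (hylim.min (tendsto_const_nhds (x := g₀ y))).max (tendsto_const_nhds (x := -g₀ y))
    rwa [min_eq_left (abs_le.1 hy).2, max_eq_left (abs_le.1 hy).1] at this
  have hdiff : Tendsto (fun k => ∫ y, (h k y - clip k y) ∂μ) atTop (𝓝 0) := by
    refine squeeze_zero_norm (fun k => ?_) hgg₀
    refine norm_integral_le_of_norm_le ((hg k).sub hg₀).abs ?_
    filter_upwards [hle k, hle₀] with y hy hy₀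
    exact abs_sub_clip_le hy ((abs_nonneg _).trans hy₀)
  refine (by simpa using hdiff.add hclip : Tendsto _ atTop _).congr fun k => ?_
  rw [integral_sub ((hg k).mono' (hmeas k) (hle k)) (hg₀.mono' (hclip_meas k) (hclip_le k))]
  ring

end Integration

/-! ### Jensen's inequality on `P(E)` -/

namespace ProbVec

variable {E : Type*}

lemma coe_nonneg (μ : ProbVec E) (i : E) : 0 ≤ (μ : E → ℝ) i := μ.2.1 i

lemma hasSum_coe (μ : ProbVec E) : HasSum (μ : E → ℝ) 1 := μ.2.2

lemma coe_le_one (μ : ProbVec E) (i : E) : (μ : E → ℝ) i ≤ 1 :=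
  le_hasSum μ.hasSum_coe i fun j _ => μ.coe_nonneg j

lemma norm_coe_mul_le (μ : ProbVec E) (i : E) {c C : ℝ} (hc : |c| ≤ C) :
    ‖(μ : E → ℝ) i * c‖ ≤ (μ : E → ℝ) i * C := by
  rw [norm_mul, Real.norm_of_nonneg (μ.coe_nonneg i)]
  exact mul_le_mul_of_nonneg_left hc (μ.coe_nonneg i)

lemma summable_mul (μ : ProbVec E) {c : E → ℝ} {C : ℝ} (hc : ∀ i, |c i| ≤ C) :
    Summable fun i => (μ : E → ℝ) i * c i :=
  (μ.hasSum_coe.summable.mul_right C).of_norm_bounded fun i => μ.norm_coe_mul_le i (hc i)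

lemma tendsto_iff {ι : Type*} {l : Filter ι} {p : ι → ProbVec E} {q : ProbVec E} :
    Tendsto p l (𝓝 q) ↔ ∀ i, Tendsto (fun k => (p k : E → ℝ) i) l (𝓝 ((q : E → ℝ) i)) := by
  rw [tendsto_subtype_rng, tendsto_pi_nhds]

lemma tendsto_tsum_abs_sub {ι : Type*} {l : Filter ι} {p : ι → ProbVec E} {q : ProbVec E}
    (h : Tendsto p l (𝓝 q)) :
    Tendsto (fun k => ∑' i, |(p k : E → ℝ) i - (q : E → ℝ) i|) l (𝓝 0) :=
  tendsto_tsum_abs_sub_of_hasSum (fun k => (p k).coe_nonneg) q.coe_nonneg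
    (fun k => (p k).hasSum_coe) q.hasSum_coe tendsto_const_nhds (tendsto_iff.1 h)

instance [Countable E] : SecondCountableTopology (ProbVec E) :=
  Topology.IsInducing.subtypeVal.secondCountableTopology

/-- The simplex `P(E)` inside the Banach space `ℓ¹(E)`, where Jensen's inequality is available. -/
noncomputable def toL1 (μ : ProbVec E) : lp (fun _ : E => ℝ) 1 :=
  ⟨(μ : E → ℝ), memℓp_gen (by simpa using μ.hasSum_coe.summable.abs)⟩

lemma toL1_injective : Function.Injective (toL1 : ProbVec E → _) := fun _ _ h =>
  Subtype.ext (congrArg (fun v : lp (fun _ : E => ℝ) 1 => (v : E → ℝ)) h)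

lemma continuous_toL1 : Continuous (toL1 : ProbVec E → _) := by
  refine continuous_iff_continuousAt.2 fun ν => tendsto_iff_norm_sub_tendsto_zero.2 ?_
  refine (tendsto_tsum_abs_sub (tendsto_id (x := 𝓝 ν))).congr fun μ => ?_
  rw [lp.norm_eq_tsum_rpow (by simp)]
  simp only [ENNReal.toReal_one, Real.rpow_one, div_one]
  rfl

lemma isInducing_toL1 : Topology.IsInducing (toL1 : ProbVec E → _) :=
  .of_comp continuous_toL1 lp.uniformContinuous_coe.continuous .subtypeVal

lemma range_toL1 :
    Set.range (toL1 : ProbVec E → _) = {v | (∀ i, 0 ≤ v i) ∧ lp.tsumCLM ℝ E ℝ v = 1} := by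
  ext v
  constructor
  · rintro ⟨μ, rfl⟩
    exact ⟨μ.coe_nonneg, μ.hasSum_coe.tsum_eq⟩
  · rintro ⟨hv, hv1⟩
    have hs : Summable v := by simpa using (lp.memℓp v).summable_of_one
    exact ⟨⟨v, hv, hs.hasSum_iff.2 hv1⟩, rfl⟩

lemma isClosed_range_toL1 : IsClosed (Set.range (toL1 : ProbVec E → _)) := by
  rw [range_toL1, Set.ofPred_and, Set.ofPred_forall]
  exact (isClosed_iInter fun i =>
    isClosed_le continuous_const (lp.evalCLM ℝ (fun _ => ℝ) 1 i).continuous).inter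
      (isClosed_eq (lp.tsumCLM ℝ E ℝ).continuous continuous_const)

lemma toL1_pvCombo {t s : ℝ} (ht : 0 ≤ t) (hs : 0 ≤ s) (hts : t + s = 1) (μ ν : ProbVec E) :
    t • μ.toL1 + s • ν.toL1 = (pvCombo t ht (by linarith) μ ν).toL1 := by
  obtain rfl : s = 1 - t := by linarith
  rfl

end ProbVec

namespace IsBddCont

variable {E : Type*}

lemma coe_apply (i : E) : IsBddCont fun ν : ProbVec E => (ν : E → ℝ) i :=
  ⟨(continuous_apply i).comp continuous_subtype_val, 1, fun ν => by
    simpa [abs_of_nonneg (ν.coe_nonneg i)] using ν.coe_le_one i⟩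

lemma integrable [Countable E] {f : ProbVec E → ℝ} (hf : IsBddCont f) (Q : Measure (ProbVec E))
    [IsFiniteMeasure Q] : Integrable f Q := by
  obtain ⟨hcont, C, hC⟩ := hf
  exact .of_bound hcont.aestronglyMeasurable C (Eventually.of_forall hC)

end IsBddCont

namespace ProbVec

variable {E : Type*} [Countable E] {Q : Measure (ProbVec E)}

lemma hasSum_integral_coe_mul [IsFiniteMeasure Q] {c : E → ℝ} {C : ℝ} (hc : ∀ i, |c i| ≤ C) :
    HasSum (fun i => (∫ ν, (ν : E → ℝ) i ∂Q) * c i) (∫ ν, ∑' i, (ν : E → ℝ) i * c i ∂Q) := by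
  simp_rw [← integral_mul_const]
  refine hasSum_integral_of_dominated_convergence (fun i ν => (ν : E → ℝ) i * C)
    (fun i => (((IsBddCont.coe_apply i).integrable Q).mul_const _).1)
    (fun i => Eventually.of_forall fun ν => ν.norm_coe_mul_le i (hc i))
    (Eventually.of_forall fun ν => ν.hasSum_coe.summable.mul_right C) ?_
    (Eventually.of_forall fun ν => (ν.summable_mul hc).hasSum)
  simp_rw [tsum_mul_right, (hasSum_coe _).tsum_eq]
  exact integrable_const _

lemma integrable_tsum_coe_mul [IsFiniteMeasure Q] {c : E → ℝ} {C : ℝ} (hc : ∀ i, |c i| ≤ C) :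
    Integrable (fun ν : ProbVec E => ∑' i, (ν : E → ℝ) i * c i) Q := by
  refine .of_bound (AEMeasurable.tsum fun i =>
    (((IsBddCont.coe_apply i).integrable Q).mul_const _).aemeasurable).aestronglyMeasurable C
    (Eventually.of_forall fun ν => ?_)
  exact tsum_of_norm_bounded (by simpa using ν.hasSum_coe.mul_right C) fun i =>
    ν.norm_coe_mul_le i (hc i)

/-- The barycenter `∫ ν Q(dν)` of a probability measure `Q` on `P(E)`. -/
noncomputable def barycenter (Q : Measure (ProbVec E)) [IsProbabilityMeasure Q] : ProbVec E :=
  ⟨fun i => ∫ ν, (ν : E → ℝ) i ∂Q, fun i => integral_nonneg fun ν => ν.coe_nonneg i, by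
    simpa [(hasSum_coe _).tsum_eq] using
      hasSum_integral_coe_mul (Q := Q) (c := fun _ => 1) fun _ => abs_one.le⟩

lemma barycenter_apply (Q : Measure (ProbVec E)) [IsProbabilityMeasure Q] (i : E) :
    (barycenter Q : E → ℝ) i = ∫ ν, (ν : E → ℝ) i ∂Q := rfl

lemma integrable_toL1 [IsProbabilityMeasure Q] : Integrable toL1 Q :=
  .of_bound continuous_toL1.aestronglyMeasurable 1 <| Eventually.of_forall fun μ => by
    rw [lp.norm_eq_tsum_rpow (by simp)]
    simp [toL1, abs_of_nonneg (μ.coe_nonneg _), μ.hasSum_coe.tsum_eq]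

lemma integral_toL1 [IsProbabilityMeasure Q] : ∫ μ, toL1 μ ∂Q = toL1 (barycenter Q) := by
  ext i
  exact ((lp.evalCLM ℝ (fun _ => ℝ) 1 i).integral_comp_comm integrable_toL1).symm

end ProbVec

namespace IsConvexFn

open ProbVec

variable {E : Type*} [Countable E] {Q : Measure (ProbVec E)}

lemma map_barycenter_le [IsProbabilityMeasure Q] {f : ProbVec E → ℝ}
    (hconv : IsConvexFn f) (hf : IsBddCont f) : f (barycenter Q) ≤ ∫ ν, f ν ∂Q := by
  let G : lp (fun _ : E => ℝ) 1 → ℝ := Function.extend toL1 f 0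
  have hG : ∀ μ, G (toL1 μ) = f μ := toL1_injective.extend_apply f 0
  have hGcont : ContinuousOn G (Set.range toL1) := by
    rintro _ ⟨μ, rfl⟩
    rw [ContinuousWithinAt, ← isInducing_toL1.map_nhds_eq, tendsto_map'_iff, hG]
    exact (hf.1.tendsto μ).congr fun ν => (hG ν).symm
  have hGconv : ConvexOn ℝ (Set.range toL1) G := by
    constructor
    · rintro _ ⟨μ, rfl⟩ _ ⟨ν, rfl⟩ t s ht hs hts
      exact ⟨_, (toL1_pvCombo ht hs hts μ ν).symm⟩
    · rintro _ ⟨μ, rfl⟩ _ ⟨ν, rfl⟩ t s ht hs hts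
      rw [toL1_pvCombo ht hs hts, hG, hG, hG]
      obtain rfl : s = 1 - t := by linarith
      exact hconv ..
  have hGtoL1 : G ∘ toL1 = f := funext hG
  have := hGconv.map_integral_le hGcont isClosed_range_toL1
    (Eventually.of_forall Set.mem_range_self) integrable_toL1 (hGtoL1 ▸ hf.integrable Q)
  simpa only [integral_toL1, hG] using this

lemma le_tsum_deltaPV [DecidableEq E] {f : ProbVec E → ℝ}
    (hconv : IsConvexFn f) (hf : IsBddCont f) (ν : ProbVec E) :
    f ν ≤ ∑' x, (ν : E → ℝ) x * f (deltaPV x) := by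
  let D : Measure (ProbVec E) :=
    Measure.sum fun x => ENNReal.ofReal ((ν : E → ℝ) x) • Measure.dirac (deltaPV x)
  have hD : IsProbabilityMeasure D := ⟨by
    simp [D, ← ENNReal.ofReal_tsum_of_nonneg ν.coe_nonneg ν.hasSum_coe.summable,
      ν.hasSum_coe.tsum_eq]⟩
  have hint : ∀ g : ProbVec E → ℝ, ∫ μ, g μ ∂D = ∑' x, (ν : E → ℝ) x * g (deltaPV x) := by
    intro g
    rw [integral_sum_dirac fun _ => ENNReal.ofReal_ne_top]
    simp only [ENNReal.toReal_ofReal (ν.coe_nonneg _), smul_eq_mul]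
  have hbary : barycenter D = ν := Subtype.ext <| funext fun i => by
    rw [barycenter_apply, hint]
    simp [deltaPV]
  simpa only [hbary, hint] using hconv.map_barycenter_le (Q := D) hf

lemma integral_le_tsum_deltaPV [DecidableEq E] [IsProbabilityMeasure Q]
    {f : ProbVec E → ℝ} (hconv : IsConvexFn f) (hf : IsBddCont f) :
    ∫ ν, f ν ∂Q ≤ ∑' x, (barycenter Q : E → ℝ) x * f (deltaPV x) := by
  have ⟨C, hC⟩ := hf.2
  simp_rw [barycenter_apply, (hasSum_integral_coe_mul fun x => hC (deltaPV x)).tsum_eq]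
  exact integral_mono (hf.integrable Q) (integrable_tsum_coe_mul fun x => hC (deltaPV x))
    (hconv.le_tsum_deltaPV hf)

end IsConvexFn

/-! ### Perspectives of functions on `P(E)` -/

section Perspective

variable {E : Type*} {f : ProbVec E → ℝ}

lemma IsConvexFn.mul_add_le (hf : IsConvexFn f) {p q r : ProbVec E} {a b : ℝ} (ha : 0 ≤ a)
    (hb : 0 ≤ b)
    (hr : ∀ j, (r : E → ℝ) j * (a + b) = (p : E → ℝ) j * a + (q : E → ℝ) j * b) :
    f r * (a + b) ≤ f p * a + f q * b := by
  rcases (add_nonneg ha hb).eq_or_lt' with hab | hab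
  · simp [show a = 0 by linarith, show b = 0 by linarith]
  obtain rfl : r = pvCombo (a / (a + b)) (by positivity) (by rw [div_le_one hab]; linarith) p q :=
    Subtype.ext <| funext fun j => by
      simp only [pvCombo]
      field_simp
      linear_combination hr j
  calc f _ * (a + b) ≤ (a / (a + b) * f p + (1 - a / (a + b)) * f q) * (a + b) :=
        mul_le_mul_of_nonneg_right (hf ..) hab.le
    _ = f p * a + f q * b := by field_simp; ring

lemma IsBddCont.tendsto_mul (hf : IsBddCont f) {ι : Type*} {l : Filter ι} {p : ι → ProbVec E}
    {q : ProbVec E} {a : ι → ℝ} {b : ℝ} (hab : Tendsto a l (𝓝 b))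
    (hpq : ∀ j, Tendsto (fun k => (p k : E → ℝ) j * a k) l (𝓝 ((q : E → ℝ) j * b))) :
    Tendsto (fun k => f (p k) * a k) l (𝓝 (f q * b)) := by
  obtain ⟨hcont, C, hC⟩ := hf
  rcases eq_or_ne b 0 with rfl | hb
  · rw [mul_zero]
    exact bdd_le_mul_tendsto_zero' C (Eventually.of_forall fun k => hC (p k)) hab
  · have hp : Tendsto p l (𝓝 q) := ProbVec.tendsto_iff.2 fun j => by
      have hdiv := (hpq j).div hab hb
      rw [mul_div_cancel_right₀ _ hb] at hdiv
      refine hdiv.congr' ?_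
      filter_upwards [hab.eventually_ne hb] with k hk
      exact mul_div_cancel_right₀ _ hk
    exact ((hcont.tendsto q).comp hp).mul hab

/- `p` need not be measurable where `a` vanishes, which is where `filterStep` takes junk values. -/
lemma aemeasurable_comp_mul_of_continuous [Countable E] (hf : Continuous f) {α : Type*}
    [MeasurableSpace α] {μ : Measure α} {p : α → ProbVec E} {a : α → ℝ} (ha : AEMeasurable a μ)
    (hpa : ∀ j, AEMeasurable (fun y => (p y : E → ℝ) j * a y) μ) :
    AEMeasurable (fun y => f (p y) * a y) μ := by
  have hs : NullMeasurableSet {y | a y ≠ 0} μ :=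
    ha.nullMeasurable (measurableSet_singleton 0).compl
  have hp : AEMeasurable p (μ.restrict {y | a y ≠ 0}) := by
    refine AEMeasurable.subtype_mk <| aemeasurable_pi_iff.2 fun j =>
      ((hpa j).div ha).restrict.congr ?_
    filter_upwards [ae_restrict_mem₀ hs] with y hy
    exact mul_div_cancel_right₀ _ hy
  convert (aemeasurable_indicator_iff₀ hs).2 ((hf.measurable.comp_aemeasurable hp).mul ha.restrict)
    using 1
  ext y
  by_cases hy : a y = 0 <;> simp [hy]

end Perspective

/-! ### The filter update -/

/-- The unnormalised joint weights `c_i M_{ij}(y)` of the hidden states `(X₀, X₁) = (i, j)` given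
the observation `y`, when `X₀` has weights `c`. Absolute summability over `E × E` is what makes the
iterated sums `rowMul` and `rowTot` free of junk values. -/
def jointWeight {E F : Type*} (M : F → E → E → ℝ) (c : E → ℝ) (y : F) (x : E × E) : ℝ :=
  c x.1 * M y x.1 x.2

section Deterministic

variable {E F : Type*} {M : F → E → E → ℝ} {y : F} {c p q : E → ℝ}

lemma jointWeight_smul_add_smul (s t : ℝ) (x : E × E) :
    jointWeight M (s • p + t • q) y x = s * jointWeight M p y x + t * jointWeight M q y x := by
  simp only [jointWeight, Pi.add_apply, Pi.smul_apply, smul_eq_mul]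
  ring

lemma jointWeight_sub (x : E × E) :
    jointWeight M (p - q) y x = jointWeight M p y x - jointWeight M q y x :=
  sub_mul ..

lemma hasSum_rowMul_apply (hs : Summable (jointWeight M c y)) (j : E) :
    HasSum (fun i => jointWeight M c y (i, j)) (rowMul M c y j) :=
  (hs.comp_injective fun _ _ h => (Prod.mk.inj h).1).hasSum

lemma hasSum_rowMul (hs : Summable (jointWeight M c y)) :
    HasSum (rowMul M c y) (∑' x, jointWeight M c y x) :=
  ((Equiv.prodComm E E).hasSum_iff.2 hs.hasSum).prod_fiberwise (hasSum_rowMul_apply hs)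

lemma rowTot_rowMul (hs : Summable (jointWeight M c y)) :
    rowTot (rowMul M c y) = ∑' x, jointWeight M c y x :=
  (hasSum_rowMul hs).tsum_eq

lemma abs_rowMul_le (hs : Summable (jointWeight M c y)) (j : E) :
    |rowMul M c y j| ≤ ∑' x, ‖jointWeight M c y x‖ :=
  (norm_tsum_le_tsum_norm (hasSum_rowMul_apply hs j).summable.norm).trans <|
    tsum_comp_le_tsum_of_inj hs.norm (fun _ => norm_nonneg _) fun _ _ h => (Prod.mk.inj h).1

lemma abs_rowTot_rowMul_le (hs : Summable (jointWeight M c y)) :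
    |rowTot (rowMul M c y)| ≤ ∑' x, ‖jointWeight M c y x‖ :=
  rowTot_rowMul hs ▸ norm_tsum_le_tsum_norm hs.norm

lemma rowMul_smul_add_smul (hp : Summable (jointWeight M p y)) (hq : Summable (jointWeight M q y))
    (s t : ℝ) (j : E) :
    rowMul M (s • p + t • q) y j = s * rowMul M p y j + t * rowMul M q y j := by
  rw [← (((hasSum_rowMul_apply hp j).mul_left s).add
    ((hasSum_rowMul_apply hq j).mul_left t)).tsum_eq]
  exact tsum_congr fun i => jointWeight_smul_add_smul s t (i, j)

lemma rowTot_rowMul_smul_add_smul (hp : Summable (jointWeight M p y))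
    (hq : Summable (jointWeight M q y)) (s t : ℝ) :
    rowTot (rowMul M (s • p + t • q) y) =
      s * rowTot (rowMul M p y) + t * rowTot (rowMul M q y) := by
  have := ((hasSum_rowMul hp).mul_left s).add ((hasSum_rowMul hq).mul_left t)
  rw [rowTot_rowMul hp, rowTot_rowMul hq, ← this.tsum_eq]
  exact tsum_congr fun j => rowMul_smul_add_smul hp hq s t j

lemma rowMul_sub (hp : Summable (jointWeight M p y)) (hq : Summable (jointWeight M q y)) (j : E) :
    rowMul M (p - q) y j = rowMul M p y j - rowMul M q y j := by
  simpa [sub_eq_add_neg] using rowMul_smul_add_smul hp hq 1 (-1) j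

lemma rowTot_rowMul_sub (hp : Summable (jointWeight M p y)) (hq : Summable (jointWeight M q y)) :
    rowTot (rowMul M (p - q) y) = rowTot (rowMul M p y) - rowTot (rowMul M q y) := by
  simpa [sub_eq_add_neg] using rowTot_rowMul_smul_add_smul hp hq 1 (-1)

variable {μ : ProbVec E}

lemma rowMul_nonneg (hM : ∀ i j, 0 ≤ M y i j) (hc : ∀ i, 0 ≤ c i) (j : E) : 0 ≤ rowMul M c y j :=
  tsum_nonneg fun i => mul_nonneg (hc i) (hM i j)

lemma rowTot_rowMul_nonneg (hM : ∀ i j, 0 ≤ M y i j) (hc : ∀ i, 0 ≤ c i) :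
    0 ≤ rowTot (rowMul M c y) :=
  tsum_nonneg (rowMul_nonneg hM hc)

lemma filterStep_mul_rowTot (hM : ∀ i j, 0 ≤ M y i j) (hs : Summable (jointWeight M μ y)) (j : E) :
    (filterStep M μ y : E → ℝ) j * rowTot (rowMul M μ y) = rowMul M μ y j := by
  have hnn := rowMul_nonneg hM μ.coe_nonneg
  have hsum : HasSum (rowMul M μ y) (rowTot (rowMul M μ y)) :=
    (hasSum_rowMul hs).summable.hasSum
  have hex : ∃ ν : ProbVec E, ∀ j,
      (ν : E → ℝ) j * rowTot (rowMul M μ y) = rowMul M μ y j := by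
    rcases eq_or_ne (rowTot (rowMul M μ y)) 0 with h0 | h0
    · have hzero := (hasSum_zero_iff_of_nonneg hnn).1 (h0 ▸ hsum)
      exact ⟨μ, fun j => by rw [h0, mul_zero, hzero, Pi.zero_apply]⟩
    · exact ⟨⟨fun j => rowMul M μ y j / rowTot (rowMul M μ y),
        fun j => div_nonneg (hnn j) (hsum.nonneg hnn), by
          simpa [div_self h0] using hsum.div_const (rowTot (rowMul M μ y))⟩,
        fun j => div_mul_cancel₀ _ h0⟩
  rw [filterStep, dif_pos hex]
  exact hex.choose_spec j

lemma abs_filterKernel_integrand_le {f : ProbVec E → ℝ} {C : ℝ} (hf : ∀ ν, |f ν| ≤ C)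
    (hM : ∀ i j, 0 ≤ M y i j) (μ : ProbVec E) :
    |f (filterStep M μ y) * rowTot (rowMul M μ y)| ≤ C * rowTot (rowMul M μ y) := by
  have htot := rowTot_rowMul_nonneg hM μ.coe_nonneg
  rw [abs_mul, abs_of_nonneg htot]
  exact mul_le_mul_of_nonneg_right (hf _) htot

lemma tendsto_filterKernel_integrand {f : ProbVec E → ℝ} (hf : IsBddCont f)
    (hM : ∀ i j, 0 ≤ M y i j) {a : ℕ → ProbVec E} {b : ProbVec E}
    (ha : ∀ k, Summable (jointWeight M (a k) y)) (hb : Summable (jointWeight M b y))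
    (hab : Tendsto (fun k => ∑' x, ‖jointWeight M (a k - b : E → ℝ) y x‖) atTop (𝓝 0)) :
    Tendsto (fun k => f (filterStep M (a k) y) * rowTot (rowMul M (a k) y)) atTop
      (𝓝 (f (filterStep M b y) * rowTot (rowMul M b y))) := by
  have hdiff : ∀ k, Summable (jointWeight M (a k - b : E → ℝ) y) := fun k =>
    ((ha k).sub hb).congr fun x => (jointWeight_sub x).symm
  refine hf.tendsto_mul ?_ fun j => ?_
  · refine tendsto_iff_norm_sub_tendsto_zero.2
      (squeeze_zero (fun _ => norm_nonneg _) (fun k => ?_) hab)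
    rw [← rowTot_rowMul_sub (ha k) hb]
    exact abs_rowTot_rowMul_le (hdiff k)
  · simp_rw [filterStep_mul_rowTot hM (ha _), filterStep_mul_rowTot hM hb]
    refine tendsto_iff_norm_sub_tendsto_zero.2
      (squeeze_zero (fun _ => norm_nonneg _) (fun k => ?_) hab)
    rw [← rowMul_sub (ha k) hb]
    exact abs_rowMul_le (hdiff k) j

lemma filterKernel_integrand_pvCombo_le {f : ProbVec E → ℝ} (hf : IsConvexFn f)
    (hM : ∀ i j, 0 ≤ M y i j) {p q : ProbVec E} (hp : Summable (jointWeight M p y))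
    (hq : Summable (jointWeight M q y)) {t : ℝ} (ht0 : 0 ≤ t) (ht1 : t ≤ 1) :
    f (filterStep M (pvCombo t ht0 ht1 p q) y) * rowTot (rowMul M (pvCombo t ht0 ht1 p q) y) ≤
      t * (f (filterStep M p y) * rowTot (rowMul M p y)) +
        (1 - t) * (f (filterStep M q y) * rowTot (rowMul M q y)) := by
  let r : E → ℝ := t • p + (1 - t) • q
  have hr : Summable (jointWeight M r y) :=
    ((hp.mul_left t).add (hq.mul_left (1 - t))).congr fun x => (jointWeight_smul_add_smul ..).symm
  have htot : rowTot (rowMul M r y) =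
      t * rowTot (rowMul M p y) + (1 - t) * rowTot (rowMul M q y) :=
    rowTot_rowMul_smul_add_smul hp hq t (1 - t)
  change f (filterStep M (pvCombo t ht0 ht1 p q) y) * rowTot (rowMul M r y) ≤ _
  rw [htot, mul_left_comm t, mul_left_comm (1 - t)]
  refine hf.mul_add_le (mul_nonneg ht0 (rowTot_rowMul_nonneg hM p.coe_nonneg))
    (mul_nonneg (sub_nonneg.2 ht1) (rowTot_rowMul_nonneg hM q.coe_nonneg)) fun j => ?_
  rw [← htot, mul_left_comm, mul_left_comm _ (1 - t), filterStep_mul_rowTot hM hp,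
    filterStep_mul_rowTot hM hq, ← rowMul_smul_add_smul hp hq]
  exact filterStep_mul_rowTot hM (μ := pvCombo t ht0 ht1 p q) hr j

end Deterministic

/-! ### The filter kernel -/

section MeanTransition

variable {E F : Type*} [MeasurableSpace F] {φ : Measure F} {M : F → E → E → ℝ} {c : E → ℝ}

lemma transMat_nonneg (hM : ∀ y i j, 0 ≤ M y i j) (i j : E) : 0 ≤ transMat M φ i j :=
  integral_nonneg fun y => hM y i j

lemma transMat_le_one (hM : ∀ y i j, 0 ≤ M y i j) {i : E} (hP : HasSum (transMat M φ i) 1)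
    (j : E) : transMat M φ i j ≤ 1 :=
  le_hasSum hP j fun k _ => transMat_nonneg hM i k

lemma integrable_jointWeight (hint : ∀ i j, Integrable (fun y => M y i j) φ) (c : E → ℝ)
    (x : E × E) : Integrable (fun y => jointWeight M c y x) φ :=
  (hint x.1 x.2).const_mul (c x.1)

lemma integral_norm_jointWeight (hM : ∀ y i j, 0 ≤ M y i j) (x : E × E) :
    ∫ y, ‖jointWeight M c y x‖ ∂φ = |c x.1| * transMat M φ x.1 x.2 := by
  simp only [jointWeight, norm_mul, Real.norm_of_nonneg (hM _ _ _), Real.norm_eq_abs,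
    integral_const_mul, transMat]

lemma hasSum_integral_norm_jointWeight (hM : ∀ y i j, 0 ≤ M y i j)
    (hP : ∀ i, HasSum (transMat M φ i) 1) (hc : Summable c) :
    HasSum (fun x => ∫ y, ‖jointWeight M c y x‖ ∂φ) (∑' i, |c i|) := by
  simp_rw [integral_norm_jointWeight hM]
  exact hasSum_mul_of_hasSum_one (transMat_nonneg hM) hP hc.abs

variable [Countable E] (hM : ∀ y i j, 0 ≤ M y i j) (hP : ∀ i, HasSum (transMat M φ i) 1)
  (hc : Summable c) (hint : ∀ x, Integrable (fun y => jointWeight M c y x) φ)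

include hM hP hc hint

lemma ae_summable_jointWeight : ∀ᵐ y ∂φ, Summable (jointWeight M c y) :=
  ae_summable_of_summable_integral_norm hint (hasSum_integral_norm_jointWeight hM hP hc).summable

lemma integrable_tsum_norm_jointWeight :
    Integrable (fun y => ∑' x, ‖jointWeight M c y x‖) φ :=
  integrable_tsum_of_summable_integral_norm (fun x => (hint x).norm) <| by
    simpa only [norm_norm] using (hasSum_integral_norm_jointWeight hM hP hc).summable

lemma integral_tsum_norm_jointWeight :
    ∫ y, ∑' x, ‖jointWeight M c y x‖ ∂φ = ∑' i, |c i| := by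
  have hsum := hasSum_integral_norm_jointWeight hM hP hc
  refine HasSum.unique ?_ hsum
  exact hasSum_integral_of_summable_integral_norm (fun x => (hint x).norm) <| by
    simpa only [norm_norm] using hsum.summable

lemma integrable_rowTot_rowMul : Integrable (fun y => rowTot (rowMul M c y)) φ :=
  (integrable_tsum_of_summable_integral_norm hint
    (hasSum_integral_norm_jointWeight hM hP hc).summable).congr <| by
      filter_upwards [ae_summable_jointWeight hM hP hc hint] with y hy
      exact (rowTot_rowMul hy).symm

lemma integral_rowTot_rowMul : ∫ y, rowTot (rowMul M c y) ∂φ = ∑' i, c i := by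
  have hweights : ∀ x : E × E, ∫ y, jointWeight M c y x ∂φ = c x.1 * transMat M φ x.1 x.2 :=
    fun _ => integral_const_mul ..
  have hsum := hasSum_integral_of_summable_integral_norm hint
    (hasSum_integral_norm_jointWeight hM hP hc).summable
  simp_rw [hweights] at hsum
  rw [← hsum.unique (hasSum_mul_of_hasSum_one (transMat_nonneg hM) hP hc)]
  refine integral_congr_ae ?_
  filter_upwards [ae_summable_jointWeight hM hP hc hint] with y hy
  exact rowTot_rowMul hy

lemma integral_rowMul (j : E) :
    ∫ y, rowMul M c y j ∂φ = ∑' i, c i * transMat M φ i j := by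
  have hcol := (hasSum_integral_norm_jointWeight hM hP hc).summable.comp_injective
    (i := fun i => (i, j)) fun _ _ h => (Prod.mk.inj h).1
  have hsum := hasSum_integral_of_summable_integral_norm (fun i => hint (i, j)) hcol
  exact hsum.tsum_eq.symm.trans (tsum_congr fun i => integral_const_mul ..)

end MeanTransition

section FilterKernel

variable {E F : Type*} [Countable E] [MeasurableSpace F] {φ : Measure F} {M : F → E → E → ℝ}
  {f : ProbVec E → ℝ}

section SingleState

variable {μ : ProbVec E} (hM : ∀ y i j, 0 ≤ M y i j) (hP : ∀ i, HasSum (transMat M φ i) 1)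
  (hμ : ∀ x, Integrable (fun y => jointWeight M μ y x) φ)

include hM hP hμ

lemma aemeasurable_filterKernel_integrand (hf : Continuous f) :
    AEMeasurable (fun y => f (filterStep M μ y) * rowTot (rowMul M μ y)) φ := by
  have hsum := μ.hasSum_coe.summable
  refine aemeasurable_comp_mul_of_continuous hf
    (integrable_rowTot_rowMul hM hP hsum hμ).aemeasurable fun j => ?_
  have hrow : AEMeasurable (fun y => rowMul M μ y j) φ :=
    AEMeasurable.tsum fun i => (hμ (i, j)).aemeasurable
  refine hrow.congr ?_
  filter_upwards [ae_summable_jointWeight hM hP hsum hμ] with y hy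
  exact (filterStep_mul_rowTot (hM y) hy j).symm

lemma integrable_filterKernel_integrand (hf : IsBddCont f) :
    Integrable (fun y => f (filterStep M μ y) * rowTot (rowMul M μ y)) φ := by
  have ⟨C, hC⟩ := hf.2
  refine ((integrable_rowTot_rowMul hM hP μ.hasSum_coe.summable hμ).const_mul C).mono'
    (aemeasurable_filterKernel_integrand hM hP hμ hf.1).aestronglyMeasurable
    (Eventually.of_forall fun y => abs_filterKernel_integrand_le hC (hM y) μ)

lemma abs_filterKernel_le {C : ℝ} (hf : ∀ ν, |f ν| ≤ C) : |filterKernel M φ f μ| ≤ C := by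
  have hsum := μ.hasSum_coe.summable
  calc ‖∫ y, f (filterStep M μ y) * rowTot (rowMul M μ y) ∂φ‖
      ≤ ∫ y, C * rowTot (rowMul M μ y) ∂φ :=
        norm_integral_le_of_norm_le ((integrable_rowTot_rowMul hM hP hsum hμ).const_mul C)
          (Eventually.of_forall fun y => abs_filterKernel_integrand_le hf (hM y) μ)
    _ = C := by
        rw [integral_const_mul, integral_rowTot_rowMul hM hP hsum hμ, μ.hasSum_coe.tsum_eq, mul_one]

lemma filterKernel_coe_apply (j : E) :
    filterKernel M φ (fun ν => (ν : E → ℝ) j) μ = ∑' i, (μ : E → ℝ) i * transMat M φ i j := by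
  rw [← integral_rowMul hM hP μ.hasSum_coe.summable hμ]
  refine integral_congr_ae ?_
  filter_upwards [ae_summable_jointWeight hM hP μ.hasSum_coe.summable hμ] with y hy
  exact filterStep_mul_rowTot (hM y) hy j

end SingleState

section Feller

variable (hM : ∀ y i j, 0 ≤ M y i j) (hP : ∀ i, HasSum (transMat M φ i) 1)
  (hint : ∀ i j, Integrable (fun y => M y i j) φ)

include hM hP hint

lemma tendsto_integral_tsum_norm_jointWeight_sub {a : ℕ → ProbVec E} {b : ProbVec E}
    (hab : Tendsto a atTop (𝓝 b)) :
    Tendsto (fun k => ∫ y, ∑' x, ‖jointWeight M (a k - b : E → ℝ) y x‖ ∂φ) atTop (𝓝 0) := by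
  refine (ProbVec.tendsto_tsum_abs_sub hab).congr fun k => ?_
  exact (integral_tsum_norm_jointWeight hM hP
    ((a k).hasSum_coe.summable.sub b.hasSum_coe.summable) (integrable_jointWeight hint _)).symm

lemma tendsto_integral_abs_rowTot_rowMul_sub {a : ℕ → ProbVec E} {b : ProbVec E}
    (hab : Tendsto a atTop (𝓝 b)) :
    Tendsto (fun k => ∫ y, |rowTot (rowMul M (a k) y) - rowTot (rowMul M b y)| ∂φ) atTop
      (𝓝 0) := by
  have hsum : ∀ k, Summable (a k - b : E → ℝ) := fun k =>
    (a k).hasSum_coe.summable.sub b.hasSum_coe.summable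
  refine squeeze_zero (fun k => integral_nonneg fun y => abs_nonneg _) (fun k => ?_)
    (tendsto_integral_tsum_norm_jointWeight_sub hM hP hint hab)
  refine integral_mono_of_nonneg (Eventually.of_forall fun y => abs_nonneg _)
    (integrable_tsum_norm_jointWeight hM hP (hsum k) (integrable_jointWeight hint _)) ?_
  filter_upwards [
    ae_summable_jointWeight hM hP (a k).hasSum_coe.summable (integrable_jointWeight hint _),
    ae_summable_jointWeight hM hP b.hasSum_coe.summable (integrable_jointWeight hint _),
    ae_summable_jointWeight hM hP (hsum k) (integrable_jointWeight hint _)] with y hay hby hy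
  rw [← rowTot_rowMul_sub hay hby]
  exact abs_rowTot_rowMul_le hy

lemma tendsto_filterKernel_of_ae_tendsto (hf : IsBddCont f) {a : ℕ → ProbVec E} {b : ProbVec E}
    (hab : Tendsto a atTop (𝓝 b))
    (hae : ∀ᵐ y ∂φ,
      Tendsto (fun k => ∑' x, ‖jointWeight M (a k - b : E → ℝ) y x‖) atTop (𝓝 0)) :
    Tendsto (fun k => filterKernel M φ f (a k)) atTop (𝓝 (filterKernel M φ f b)) := by
  have ⟨C, hC⟩ := hf.2
  have hs : ∀ μ : ProbVec E, ∀ᵐ y ∂φ, Summable (jointWeight M μ y) := fun μ =>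
    ae_summable_jointWeight hM hP μ.hasSum_coe.summable (integrable_jointWeight hint _)
  have htot : ∀ μ : ProbVec E, Integrable (fun y => C * rowTot (rowMul M μ y)) φ := fun μ =>
    .const_mul (integrable_rowTot_rowMul hM hP μ.hasSum_coe.summable
      (integrable_jointWeight hint _)) C
  refine tendsto_integral_of_le_of_tendsto_integral_abs_sub
    (fun k => (integrable_filterKernel_integrand hM hP (integrable_jointWeight hint _) hf).1)
    (fun k => htot (a k)) (htot b) ?_
    (fun k => Eventually.of_forall fun y => abs_filterKernel_integrand_le hC (hM y) (a k))
    (Eventually.of_forall fun y => abs_filterKernel_integrand_le hC (hM y) b) ?_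
  · simp_rw [← mul_sub, abs_mul, integral_const_mul]
    simpa using (tendsto_integral_abs_rowTot_rowMul_sub hM hP hint hab).const_mul |C|
  · filter_upwards [ae_all_iff.2 fun k => hs (a k), hs b, hae] with y hay hby hy
    exact tendsto_filterKernel_integrand hf (hM y) hay hby hy

lemma continuous_filterKernel (hf : IsBddCont f) : Continuous (filterKernel M φ f) := by
  refine continuous_iff_seqContinuous.2 fun a b hab => tendsto_of_subseq_tendsto fun ms hms => ?_
  have hsub : Tendsto (a ∘ ms) atTop (𝓝 b) := hab.comp hms
  have hL1 := tendsto_integral_tsum_norm_jointWeight_sub hM hP hint hsub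
  obtain ⟨ns, hns, hae⟩ := exists_strictMono_ae_tendsto_zero_of_tendsto_integral_norm
    (fun k => integrable_tsum_norm_jointWeight hM hP
      ((a (ms k)).hasSum_coe.summable.sub b.hasSum_coe.summable) (integrable_jointWeight hint _))
    (hL1.congr fun k => integral_congr_ae <| Eventually.of_forall fun y =>
      (Real.norm_of_nonneg (tsum_nonneg fun _ => norm_nonneg _)).symm)
  exact ⟨ns, tendsto_filterKernel_of_ae_tendsto hM hP hint hf (hsub.comp hns.tendsto_atTop) hae⟩

lemma isBddCont_filterKernel (hf : IsBddCont f) : IsBddCont (filterKernel M φ f) := by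
  have ⟨C, hC⟩ := hf.2
  exact ⟨continuous_filterKernel hM hP hint hf, C, fun μ =>
    abs_filterKernel_le hM hP (integrable_jointWeight hint _) hC⟩

lemma isConvexFn_filterKernel (hf : IsBddCont f) (hconv : IsConvexFn f) :
    IsConvexFn (filterKernel M φ f) := by
  intro t ht0 ht1 p q
  have hint' : ∀ μ : ProbVec E,
      Integrable (fun y => f (filterStep M μ y) * rowTot (rowMul M μ y)) φ := fun μ =>
    integrable_filterKernel_integrand hM hP (integrable_jointWeight hint _) hf
  have hs : ∀ μ : ProbVec E, ∀ᵐ y ∂φ, Summable (jointWeight M μ y) := fun μ =>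
    ae_summable_jointWeight hM hP μ.hasSum_coe.summable (integrable_jointWeight hint _)
  unfold filterKernel
  rw [← integral_const_mul, ← integral_const_mul,
    ← integral_add ((hint' p).const_mul t) ((hint' q).const_mul (1 - t))]
  refine integral_mono_ae (hint' _) (((hint' p).const_mul t).add ((hint' q).const_mul (1 - t))) ?_
  filter_upwards [hs p, hs q] with y hp hq
  exact filterKernel_integrand_pvCombo_le hconv (hM y) hp hq ht0 ht1

end Feller

end FilterKernel

/-! ### Invariant measures of the filter kernel -/

section Integrability

variable {E F : Type*} {M : F → E → E → ℝ} {μ : ProbVec E} {y : F}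

lemma summable_jointWeight_of_sum_le (hM : ∀ i j, 0 ≤ M y i j) {C : ℝ}
    (hC : ∀ i (s : Finset E), ∑ j ∈ s, M y i j ≤ C) : Summable (jointWeight M μ y) := by
  have hrow : ∀ i, Summable (M y i) := fun i => summable_of_sum_le (hM i) (hC i)
  have hnn : 0 ≤ jointWeight M μ y := fun x => mul_nonneg (μ.coe_nonneg _) (hM _ _)
  refine (summable_prod_of_nonneg hnn).2 ⟨fun i => (hrow i).mul_left ((μ : E → ℝ) i), ?_⟩
  simp_rw [jointWeight, tsum_mul_left]
  exact μ.summable_mul fun i =>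
    (abs_of_nonneg (tsum_nonneg (hM i))).trans_le ((hrow i).tsum_le_of_sum_le (hC i))

lemma norm_jointWeight_le_rowTot_rowMul (hM : ∀ i j, 0 ≤ M y i j)
    (hs : Summable (jointWeight M μ y)) (x : E × E) :
    ‖jointWeight M μ y x‖ ≤ rowTot (rowMul M μ y) := by
  have hnn : ∀ x, 0 ≤ jointWeight M μ y x := fun x => mul_nonneg (μ.coe_nonneg _) (hM _ _)
  rw [rowTot_rowMul hs, Real.norm_of_nonneg (hnn x)]
  exact hs.le_tsum x fun x' _ => hnn x'

variable [MeasurableSpace F] {φ : Measure F}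
  (hmeas : ∀ i j, AEStronglyMeasurable (fun y => M y i j) φ) (hM : ∀ y i j, 0 ≤ M y i j)
  (hbd : ∀ᵐ y ∂φ, ∃ C : ℝ, ∀ i (s : Finset E), ∑ j ∈ s, M y i j ≤ C)

include hmeas hM hbd

lemma integrable_jointWeight_of_integrable_rowTot
    (hμ : Integrable (fun y => rowTot (rowMul M μ y)) φ) (x : E × E) :
    Integrable (fun y => jointWeight M μ y x) φ := by
  refine hμ.mono' ((hmeas x.1 x.2).const_mul _) ?_
  filter_upwards [hbd] with y ⟨C, hC⟩
  exact norm_jointWeight_le_rowTot_rowMul (hM y) (summable_jointWeight_of_sum_le (hM y) hC) x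

variable [Countable E] (hP : ∀ i, HasSum (transMat M φ i) 1)

include hP

lemma filterKernel_one_le : filterKernel M φ (fun _ => 1) μ ≤ 1 := by
  by_cases hμ : Integrable (fun y => rowTot (rowMul M μ y)) φ
  · exact (le_abs_self _).trans <| abs_filterKernel_le hM hP
      (integrable_jointWeight_of_integrable_rowTot hmeas hM hbd hμ) fun _ => by simp
  · simp [filterKernel, integral_undef hμ]

/- A non-integrable entry of `M` has the junk value `0` in `transMat M φ`. Invariance of `𝕄`, tested
on the constant `1`, excludes this: `Π1(μ)` is `1` or `0` according to whether the mass
`rowTot (μM(y))` is integrable, and `∫ Π1 d𝕄 = 1`. -/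
lemma IsPiInvariant.ae_integrable_jointWeight {𝕄 : ProbabilityMeasure (ProbVec E)}
    (h𝕄 : IsPiInvariant M φ 𝕄) :
    ∀ᵐ μ : ProbVec E ∂(𝕄 : Measure (ProbVec E)),
      ∀ x, Integrable (fun y => jointWeight M μ y x) φ := by
  have hone : ∫ μ, filterKernel M φ (fun _ => 1) μ ∂(𝕄 : Measure (ProbVec E)) =
      ∫ _, 1 ∂(𝕄 : Measure (ProbVec E)) :=
    h𝕄 _ ⟨continuous_const, 1, fun _ => by simp⟩
  have hint : Integrable (filterKernel M φ fun _ => 1) (𝕄 : Measure (ProbVec E)) :=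
    not_imp_comm.1 integral_undef (by simp [hone])
  have heq := (integral_eq_iff_of_ae_le hint (integrable_const 1)
    (Eventually.of_forall fun μ => filterKernel_one_le hmeas hM hbd hP)).1 hone
  filter_upwards [heq] with μ hμ
  refine integrable_jointWeight_of_integrable_rowTot hmeas hM hbd <|
    not_imp_comm.1 integral_undef ?_
  simp only [filterKernel, one_mul] at hμ
  simp [hμ]

end Integrability

section Irreducible

variable {E : Type*} [DecidableEq E] {P : E → E → ℝ}

lemma matPow_nonneg (hP : ∀ i j, 0 ≤ P i j) (n : ℕ) (i j : E) : 0 ≤ matPow P n i j := by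
  induction n generalizing j with
  | zero => unfold matPow; positivity
  | succ n ih => exact tsum_nonneg fun k => mul_nonneg (ih k) (hP k j)

lemma pos_of_matPow_pos (hP : ∀ i j, 0 ≤ P i j) {c : E → ℝ} (hc : ∀ i, 0 ≤ c i)
    (hinv : ∀ j, HasSum (fun i => c i * P i j) (c j)) {i : E} (hi : 0 < c i) {n : ℕ} {j : E}
    (hij : 0 < matPow P n i j) : 0 < c j := by
  induction n generalizing j with
  | zero =>
    obtain rfl : i = j := by_contra fun hne => by simp [matPow, hne] at hij
    exact hi
  | succ n ih =>
    obtain ⟨k, hk⟩ : ∃ k, matPow P n i k * P k j ≠ 0 := by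
      by_contra! hzero
      simp [matPow, hzero] at hij
    have hik : 0 < matPow P n i k := (matPow_nonneg hP n i k).lt_of_ne' (left_ne_zero_of_mul hk)
    have hkj : 0 < P k j := (hP k j).lt_of_ne' (right_ne_zero_of_mul hk)
    exact (mul_pos (ih hik) hkj).trans_le
      (le_hasSum (hinv j) k fun l _ => mul_nonneg (hc l) (hP l j))

lemma ProbVec.pos_of_irreducible (hP : ∀ i j, 0 ≤ P i j) (hirr : ∀ i j, ∃ n, 0 < matPow P n i j)
    (μ : ProbVec E) (hinv : ∀ j, HasSum (fun i => (μ : E → ℝ) i * P i j) ((μ : E → ℝ) j)) (j : E) :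
    0 < (μ : E → ℝ) j := by
  obtain ⟨i, hi⟩ : ∃ i, (μ : E → ℝ) i ≠ 0 := by
    by_contra! hzero
    exact zero_ne_one ((hasSum_zero.congr_fun hzero).unique μ.hasSum_coe)
  obtain ⟨n, hn⟩ := hirr i j
  exact pos_of_matPow_pos hP μ.coe_nonneg hinv ((μ.coe_nonneg i).lt_of_ne' hi) hn

end Irreducible

namespace IsPiInvariant

open ProbVec

variable {E F : Type*} [Countable E] [MeasurableSpace F] {φ : Measure F} {M : F → E → E → ℝ}
  {𝕄 : ProbabilityMeasure (ProbVec E)}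

lemma hasSum_barycenter_mul_transMat (h𝕄 : IsPiInvariant M φ 𝕄) (hM : ∀ y i j, 0 ≤ M y i j)
    (hP : ∀ i, HasSum (transMat M φ i) 1)
    (hint : ∀ᵐ μ : ProbVec E ∂(𝕄 : Measure (ProbVec E)),
      ∀ x, Integrable (fun y => jointWeight M μ y x) φ)
    (j : E) :
    HasSum (fun i => (barycenter (𝕄 : Measure (ProbVec E)) : E → ℝ) i * transMat M φ i j)
      ((barycenter (𝕄 : Measure (ProbVec E)) : E → ℝ) j) := by
  have hcol : ∀ i, |transMat M φ i j| ≤ 1 := fun i =>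
    (abs_of_nonneg (transMat_nonneg hM i j)).trans_le (transMat_le_one hM (hP i) j)
  have hkernel : ∫ ν, filterKernel M φ (fun ρ => (ρ : E → ℝ) j) ν ∂(𝕄 : Measure (ProbVec E)) =
      ∫ ν : ProbVec E, ∑' i, (ν : E → ℝ) i * transMat M φ i j ∂(𝕄 : Measure (ProbVec E)) := by
    refine integral_congr_ae ?_
    filter_upwards [hint] with ν hν
    exact filterKernel_coe_apply hM hP hν j
  rw [barycenter_apply, ← h𝕄 _ (IsBddCont.coe_apply j), hkernel]
  exact hasSum_integral_coe_mul hcol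

lemma integrable_entry_of_irreducible [DecidableEq E] (h𝕄 : IsPiInvariant M φ 𝕄)
    (hmeas : ∀ i j, AEStronglyMeasurable (fun y => M y i j) φ) (hM : ∀ y i j, 0 ≤ M y i j)
    (hbd : ∀ᵐ y ∂φ, ∃ C : ℝ, ∀ i (s : Finset E), ∑ j ∈ s, M y i j ≤ C)
    (hP : ∀ i, HasSum (transMat M φ i) 1) (hirr : ∀ i j, ∃ n, 0 < matPow (transMat M φ) n i j)
    (i j : E) : Integrable (fun y => M y i j) φ := by
  have hint := h𝕄.ae_integrable_jointWeight hmeas hM hbd hP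
  have hpos : 0 < (barycenter (𝕄 : Measure (ProbVec E)) : E → ℝ) i :=
    ProbVec.pos_of_irreducible (transMat_nonneg hM) hirr _
      (h𝕄.hasSum_barycenter_mul_transMat hM hP hint) i
  by_contra hnot
  refine hpos.ne' (integral_eq_zero_of_ae ?_)
  filter_upwards [hint] with ν hν
  by_contra hνi
  exact hnot ((integrable_const_mul_iff (IsUnit.mk0 _ hνi) _).1 (hν (i, j)))

end IsPiInvariant

section Iterate

variable {E F : Type*} [Countable E] [MeasurableSpace F] {φ : Measure F} {M : F → E → E → ℝ}
  {f : ProbVec E → ℝ} (hM : ∀ y i j, 0 ≤ M y i j) (hP : ∀ i, HasSum (transMat M φ i) 1)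
  (hint : ∀ i j, Integrable (fun y => M y i j) φ)

include hM hP hint

lemma isBddCont_iterate_filterKernel (hf : IsBddCont f) (n : ℕ) :
    IsBddCont ((filterKernel M φ)^[n] f) := by
  induction n with
  | zero => exact hf
  | succ n ih =>
    rw [Function.iterate_succ_apply']
    exact isBddCont_filterKernel hM hP hint ih

lemma isConvexFn_iterate_filterKernel (hf : IsBddCont f) (hconv : IsConvexFn f) (n : ℕ) :
    IsConvexFn ((filterKernel M φ)^[n] f) := by
  induction n with
  | zero => exact hconv
  | succ n ih =>
    rw [Function.iterate_succ_apply']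
    exact isConvexFn_filterKernel hM hP hint (isBddCont_iterate_filterKernel hM hP hint hf n) ih

lemma IsPiInvariant.integral_iterate_filterKernel {𝕄 : ProbabilityMeasure (ProbVec E)}
    (h𝕄 : IsPiInvariant M φ 𝕄) (hf : IsBddCont f) (n : ℕ) :
    ∫ ν, (filterKernel M φ)^[n] f ν ∂(𝕄 : Measure (ProbVec E)) =
      ∫ ν, f ν ∂(𝕄 : Measure (ProbVec E)) := by
  induction n with
  | zero => rfl
  | succ n ih =>
    rw [Function.iterate_succ_apply', h𝕄 _ (isBddCont_iterate_filterKernel hM hP hint hf n), ih]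

end Iterate

open ProbVec in
theorem invariant_measure_barycenter_and_convex_sandwich_general
    {E : Type*} [Countable E] [DecidableEq E] {F : Type*} [MeasurableSpace F] (φ : Measure F)
    (M : F → E → E → ℝ) (hMint : ∀ i j, Integrable (fun y => M y i j) φ)
    (hMnn : ∀ y i j, 0 ≤ M y i j) (hPtrans : ∀ i, HasSum (transMat M φ i) 1)
    (𝕄 : ProbabilityMeasure (ProbVec E)) (h𝕄 : IsPiInvariant M φ 𝕄) :
    (∀ j, ∑' i, (barycenter (𝕄 : Measure (ProbVec E)) : E → ℝ) i * transMat M φ i j =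
        (barycenter (𝕄 : Measure (ProbVec E)) : E → ℝ) j) ∧
      ∀ f : ProbVec E → ℝ, IsBddCont f → IsConvexFn f → ∀ n : ℕ,
        ((filterKernel M φ)^[n] f) (barycenter (𝕄 : Measure (ProbVec E))) ≤
            ∫ ν, f ν ∂(𝕄 : Measure (ProbVec E)) ∧
          ∫ ν, f ν ∂(𝕄 : Measure (ProbVec E)) ≤
            ∑' x : E, (barycenter (𝕄 : Measure (ProbVec E)) : E → ℝ) x *
              ((filterKernel M φ)^[n] f) (deltaPV x) := by
  refine ⟨fun j => (h𝕄.hasSum_barycenter_mul_transMat hMnn hPtrans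
    (Eventually.of_forall fun μ => integrable_jointWeight hMint μ) j).tsum_eq,
    fun f hf hconv n => ?_⟩
  have hfn := isBddCont_iterate_filterKernel hMnn hPtrans hMint hf n
  have hconvn := isConvexFn_iterate_filterKernel hMnn hPtrans hMint hf hconv n
  rw [← h𝕄.integral_iterate_filterKernel hMnn hPtrans hMint hf n]
  exact ⟨hconvn.map_barycenter_le hfn, hconvn.integral_le_tsum_deltaPV hfn⟩

/-- For any `Π`-invariant probability measure `𝕄` on `P(E)`:
(i) the barycenter of `𝕄` is `λ`, and (ii) for every bounded continuous convex `f` and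
every `n`, `Π^n f(λ) ≤ ∫ f d𝕄 ≤ ∑_x λ_x Π^n f(δ_x)`. -/
theorem invariant_measure_barycenter_and_convex_sandwich
    {E : Type*} [Countable E] [Nonempty E] [DecidableEq E]
    {F : Type*} [TopologicalSpace F] [PolishSpace F] [MeasurableSpace F] [BorelSpace F]
    (φ : Measure F) [SigmaFinite φ]
    (M : F → E → E → ℝ)
    (hMmeas : ∀ i j, Measurable fun y => M y i j)
    (hMnn : ∀ y i j, 0 ≤ M y i j)
    (hMbd : ∀ᵐ y ∂φ, ∃ C : ℝ, ∀ (i : E) (s : Finset E), ∑ j ∈ s, M y i j ≤ C)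
    (hPtrans : ∀ i, HasSum (fun j => transMat M φ i j) 1)
    (hPirr : ∀ i j : E, ∃ n : ℕ, 0 < matPow (transMat M φ) n i j)
    (lam : ProbVec E)
    (hlamInv : ∀ j, ∑' i, (lam : E → ℝ) i * transMat M φ i j = (lam : E → ℝ) j)
    (hlamUniq : ∀ ρ : ProbVec E,
      (∀ j, ∑' i, (ρ : E → ℝ) i * transMat M φ i j = (ρ : E → ℝ) j) → ρ = lam)
    (𝕄 : ProbabilityMeasure (ProbVec E)) (h𝕄 : IsPiInvariant M φ 𝕄) :
    (∀ i : E, ∫ ν, (ν : E → ℝ) i ∂(𝕄 : Measure (ProbVec E)) = (lam : E → ℝ) i) ∧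
      ∀ f : ProbVec E → ℝ, IsBddCont f → IsConvexFn f → ∀ n : ℕ,
        ((filterKernel M φ)^[n] f) lam ≤ ∫ ν, f ν ∂(𝕄 : Measure (ProbVec E)) ∧
          ∫ ν, f ν ∂(𝕄 : Measure (ProbVec E)) ≤
            ∑' x : E, (lam : E → ℝ) x * ((filterKernel M φ)^[n] f) (deltaPV x) := by
  have hMint := h𝕄.integrable_entry_of_irreducible (fun i j => (hMmeas i j).aestronglyMeasurable)
    hMnn hMbd hPtrans hPirr
  obtain ⟨hinv, hsandwich⟩ :=
    invariant_measure_barycenter_and_convex_sandwich_general φ M hMint hMnn hPtrans 𝕄 h𝕄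
  obtain rfl := hlamUniq _ hinv
  exact ⟨fun i => rfl, hsandwich⟩
end

section
/- Let p ≥ 1, let A ∈ [0,∞)^{p×p} be a nonnegative matrix, let u ∈ [0,∞)^p be a nonnegative column vector, let ρ ∈ [0,∞)^p be a row vector with Σ_j ρ_j = 1, and let δ > 0 and α > δ. Suppose ‖A − uρ‖ < δ, where ‖B‖ := max_i Σ_j |B_{ij}| and uρ is the rank-one matrix (u_i ρ_j)_{ij}. Then for every probability row vector μ ∈ [0,∞)^p (Σ_i μ_i = 1) with μ·u > α: (i) μA1 := Σ_j (μA)_j > α − δ > 0, and (ii) Σ_j |(μA)_j/(μA1) − ρ_j| ≤ 2δ/(α − δ). -/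
/-!
Averaging the rows of `A − uρ` against `μ` shows that `v = μA` lies within `δ` of `cρ` in `ℓ¹`,
where `c = μ·u > α`. Since `∑ ρ = 1`, summing coordinates gives `|∑ v − c| ≤ δ`, so replacing `c` by
the true mass `∑ v` costs at most another `δ`, and dividing by `∑ v > α − δ` gives the bound.
-/

open Finset

open scoped Matrix

section OrderedRing

variable {m n R : Type*} [Fintype m] [Fintype n] [Ring R] [LinearOrder R] [IsOrderedRing R]

theorem sum_abs_vecMul_le {B : Matrix m n R} {δ : R} (hB : ∀ i, ∑ j, |B i j| ≤ δ) (μ : m → R) :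
    ∑ j, |(μ ᵥ* B) j| ≤ (∑ i, |μ i|) * δ :=
  calc ∑ j, |(μ ᵥ* B) j|
      ≤ ∑ j, ∑ i, |μ i * B i j| := sum_le_sum fun _ _ => abs_sum_le_sum_abs _ _
    _ = ∑ i, |μ i| * ∑ j, |B i j| := by
        rw [sum_comm]
        simp only [abs_mul, mul_sum]
    _ ≤ ∑ i, |μ i| * δ := by
        gcongr with i
        exact hB i
    _ = (∑ i, |μ i|) * δ := (sum_mul _ _ _).symm

theorem sum_abs_vecMul_sub_dotProduct_mul_le {A : Matrix m n R} {u : m → R} {ρ : n → R} {δ : R}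
    (hA : ∀ i, ∑ j, |A i j - u i * ρ j| ≤ δ) (μ : m → R) :
    ∑ j, |(μ ᵥ* A) j - μ ⬝ᵥ u * ρ j| ≤ (∑ i, |μ i|) * δ := by
  simpa only [Matrix.vecMul_sub, Matrix.vecMul_vecMulVec, Pi.sub_apply, Pi.smul_apply, smul_eq_mul]
    using sum_abs_vecMul_le (B := A - Matrix.vecMulVec u ρ) hA μ

theorem abs_sum_sub_le_sum_abs_sub_mul {ρ : n → R} (hρ : ∑ j, ρ j = 1) (v : n → R) (c : R) :
    |∑ j, v j - c| ≤ ∑ j, |v j - c * ρ j| :=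
  calc |∑ j, v j - c| = |∑ j, (v j - c * ρ j)| := by
        rw [sum_sub_distrib, ← mul_sum, hρ, mul_one]
    _ ≤ ∑ j, |v j - c * ρ j| := abs_sum_le_sum_abs _ _

theorem sum_abs_sub_sum_mul_le {ρ : n → R} (hρ : ∑ j, ρ j = 1) (v : n → R) (c : R) :
    ∑ j, |v j - (∑ k, v k) * ρ j| ≤ (∑ j, |v j - c * ρ j|) * (1 + ∑ j, |ρ j|) :=
  calc ∑ j, |v j - (∑ k, v k) * ρ j|
      ≤ ∑ j, (|v j - c * ρ j| + |∑ k, v k - c| * |ρ j|) := by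
        gcongr with j
        rw [← abs_mul, sub_mul, abs_sub_comm (_ * ρ j)]
        exact abs_sub_le _ _ _
    _ = ∑ j, |v j - c * ρ j| + |∑ k, v k - c| * ∑ j, |ρ j| := by
        rw [sum_add_distrib, mul_sum]
    _ ≤ ∑ j, |v j - c * ρ j| + (∑ j, |v j - c * ρ j|) * ∑ j, |ρ j| := by
        gcongr
        exact abs_sum_sub_le_sum_abs_sub_mul hρ v c
    _ = (∑ j, |v j - c * ρ j|) * (1 + ∑ j, |ρ j|) := (mul_one_add _ _).symm

end OrderedRing

section OrderedField

variable {m n K : Type*} [Fintype m] [Fintype n] [Field K] [LinearOrder K] [IsStrictOrderedRing K]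

theorem sum_abs_div_sub {s : K} (hs : s ≠ 0) (v ρ : n → K) :
    ∑ j, |v j / s - ρ j| = (∑ j, |v j - s * ρ j|) / |s| := by
  simp only [sum_div, ← abs_div, sub_div, mul_div_cancel_left₀ _ hs]

theorem normalized_row_close_to_rho_of_close_to_rank_one_general
    {A : Matrix m n K} {u : m → K} {ρ : n → K} (hρ : ∑ j, ρ j = 1)
    {δ α : K} (hδ : 0 ≤ δ) (hα : δ < α) (hA : ∀ i, ∑ j, |A i j - u i * ρ j| ≤ δ)
    {μ : m → K} (hμ : ∑ i, |μ i| ≤ 1) (hμu : α < μ ⬝ᵥ u) :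
    (0 < α - δ ∧ α - δ < ∑ j, (μ ᵥ* A) j) ∧
      ∑ j, |(μ ᵥ* A) j / (∑ k, (μ ᵥ* A) k) - ρ j| ≤ δ * (1 + ∑ j, |ρ j|) / (α - δ) := by
  set v := μ ᵥ* A
  have close : ∑ j, |v j - μ ⬝ᵥ u * ρ j| ≤ δ :=
    (sum_abs_vecMul_sub_dotProduct_mul_le hA μ).trans (mul_le_of_le_one_left hδ hμ)
  have mass_close : |∑ j, v j - μ ⬝ᵥ u| ≤ δ :=
    (abs_sum_sub_le_sum_abs_sub_mul hρ v _).trans close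
  have gap_pos : 0 < α - δ := sub_pos.mpr hα
  have gap_lt_mass : α - δ < ∑ j, v j := by linarith [neg_le_of_abs_le mass_close]
  have mass_pos : 0 < ∑ j, v j := gap_pos.trans gap_lt_mass
  refine ⟨⟨gap_pos, gap_lt_mass⟩, ?_⟩
  rw [sum_abs_div_sub mass_pos.ne', abs_of_pos mass_pos]
  gcongr
  exact (sum_abs_sub_sum_mul_le hρ v _).trans (by gcongr)

end OrderedField

/-- Quantitative filter contraction near a rank-one matrix: if `‖A − uρ‖ < δ` in the
norm `‖B‖ = max_i ∑_j |B_{ij}|`, `ρ` is a probability row vector, and `μ` is a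
probability row vector with `μ·u > α > δ`, then `μA1 > α − δ > 0` and
`‖μA/(μA1) − ρ‖ ≤ 2δ/(α − δ)` in `ℓ¹`. -/
theorem normalized_row_close_to_rho_of_close_to_rank_one
    (p : ℕ) (hp : 1 ≤ p)
    (A : Matrix (Fin p) (Fin p) ℝ) (hA : ∀ i j, 0 ≤ A i j)
    (u : Fin p → ℝ) (hu : ∀ i, 0 ≤ u i)
    (ρ : Fin p → ℝ) (hρ : ∀ j, 0 ≤ ρ j) (hρ1 : ∑ j, ρ j = 1)
    (δ α : ℝ) (hδ : 0 < δ) (hα : δ < α)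
    (hnorm : ∀ i, ∑ j, |A i j - u i * ρ j| < δ)
    (μ : Fin p → ℝ) (hμ : ∀ i, 0 ≤ μ i) (hμ1 : ∑ i, μ i = 1)
    (hμu : α < ∑ i, μ i * u i) :
    (0 < α - δ ∧ α - δ < ∑ j, ∑ i, μ i * A i j) ∧
      ∑ j, |(∑ i, μ i * A i j) / (∑ j', ∑ i, μ i * A i j') - ρ j| ≤ 2 * δ / (α - δ) := by
  have hρ_abs : ∑ j, |ρ j| = 1 := by simp only [abs_of_nonneg (hρ _), hρ1]
  have hμ_abs : ∑ i, |μ i| ≤ 1 := by simp only [abs_of_nonneg (hμ _), hμ1, le_refl]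
  simpa only [hρ_abs, one_add_one_eq_two, mul_comm δ, Matrix.vecMul, dotProduct] using
    normalized_row_close_to_rho_of_close_to_rank_one_general hρ1 hδ.le hα (fun i => (hnorm i).le)
      hμ_abs hμu
end
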